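/- arXiv:2106.11604 — 6 statements merged into one kernel-verified Lean document; each statement's English description precedes it below -/
import Mathlib

section
/- Every real polynomial is liftable with respect to the shift semigroup on L²(ℝ): for any n ∈ ℕ and real coefficients c_0, …, c_n, setting g := Σ_{k=0}^n k!·c_k·1_{[-k,-k+1]} ∈ L²(ℝ), one has Σ_{k=0}^n c_k t^k = ⟨g, exp(tA) 1_{[0,1]}⟩_{L²(ℝ)} for every real number t. In particular, the Bernstein polynomial K_n(t) = Σ_{k=0}^n κ_{n,k} t^k of a function K satisfies K_n(t) = ⟨g_n, exp(tA) 1_{[0,1]}⟩ with g_n := Σ_{k=0}^n k!·κ_{n,k}·1_{[-k,-k+1]}. -/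
open MeasureTheory

/-- The indicator function of the interval `[a, b]`, regarded as an element of `L²(ℝ)`. -/
noncomputable def ind (a b : ℝ) : Lp ℝ 2 (volume : Measure ℝ) :=
  indicatorConstLp 2 (measurableSet_Icc : MeasurableSet (Set.Icc a b))
    (by rw [Real.volume_Icc]; exact ENNReal.ofReal_ne_top) (1 : ℝ)

/-- The coefficients `κ_{n,k}` of the monomial expansion of the Bernstein polynomial of order `n`
of a function `K` on `[0, T]`. -/
noncomputable def bernsteinCoeff (T : ℝ) (K : ℝ → ℝ) (n k : ℕ) : ℝ :=
  (1 / T ^ k) * ∑ i ∈ Finset.range (k + 1),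
    (-1 : ℝ) ^ (k - i) * K ((i : ℝ) * T / n) * (n.choose i) * ((n - i).choose (k - i))

/-!
If the orbit `v, B v, B² v, …` of a vector `v` of a Hilbert space is orthonormal, then pairing the
exponential series `exp (t B) v = ∑ tʲ / j! • Bʲ v` with `Bᵏ v` isolates the coefficient
`tᵏ / k!`, so every polynomial in `t` is the pairing of `exp (t B) v` with a linear combination of
orbit vectors. The shift `A` maps `1_{[a,b]}` to `1_{[a-1,b-1]}`, so the orbit of `1_{[0,1]}`
consists of the indicators of `[-k,-k+1]`, which have unit length and overlap in null sets only.
-/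

section ExponentialOrbit

open scoped Nat InnerProductSpace

lemma hasSum_exp_smul_apply {𝕜 E : Type*} [RCLike 𝕜] [NormedAddCommGroup E] [NormedSpace 𝕜 E]
    [CompleteSpace E] (B : E →L[𝕜] E) (t : 𝕜) (v : E) :
    HasSum (fun k : ℕ => (t ^ k / k !) • (B ^ k) v) (NormedSpace.exp (t • B) v) := by
  have hasSum_exp := NormedSpace.exp_series_hasSum_exp' (𝕂 := 𝕜) (t • B)
  simpa [smul_pow, smul_smul, div_eq_inv_mul] using
    hasSum_exp.mapL (ContinuousLinearMap.apply 𝕜 E v)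

variable {𝕜 E : Type*} [RCLike 𝕜] [NormedAddCommGroup E] [InnerProductSpace 𝕜 E] [CompleteSpace E]
  {B : E →L[𝕜] E} {v : E}

lemma inner_pow_apply_exp_smul_apply (orbit_orthonormal : Orthonormal 𝕜 fun k : ℕ => (B ^ k) v)
    (t : 𝕜) (k : ℕ) :
    ⟪(B ^ k) v, NormedSpace.exp (t • B) v⟫_𝕜 = t ^ k / k ! := by
  have hasSum_inner := (hasSum_exp_smul_apply B t v).mapL (innerSL 𝕜 ((B ^ k) v))
  simp only [innerSL_apply_apply, inner_smul_right,
    orthonormal_iff_ite.mp orbit_orthonormal, mul_ite, mul_one, mul_zero] at hasSum_inner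
  refine hasSum_inner.unique ?_
  simpa only [if_true] using hasSum_single k fun j (hj : j ≠ k) => if_neg hj.symm

lemma inner_sum_factorial_smul_pow_apply_exp_smul_apply
    (orbit_orthonormal : Orthonormal 𝕜 fun k : ℕ => (B ^ k) v)
    (s : Finset ℕ) (c : ℕ → 𝕜) (t : 𝕜) :
    ⟪∑ k ∈ s, (k ! * c k) • (B ^ k) v, NormedSpace.exp (t • B) v⟫_𝕜 =
      ∑ k ∈ s, starRingEnd 𝕜 (c k) * t ^ k := by
  rw [sum_inner]
  refine Finset.sum_congr rfl fun k _ => ?_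
  have factorial_ne_zero : (k ! : 𝕜) ≠ 0 := Nat.cast_ne_zero.mpr k.factorial_ne_zero
  rw [inner_smul_left, inner_pow_apply_exp_smul_apply orbit_orthonormal, map_mul, map_natCast]
  field_simp

end ExponentialOrbit

section UnitIntervals

lemma orthonormal_indicatorConstLp_one (𝕜 : Type*) [RCLike 𝕜] {α ι : Type*} [MeasurableSpace α]
    {μ : Measure α} {s : ι → Set α} (hs : ∀ i, MeasurableSet (s i)) (hμs : ∀ i, μ (s i) = 1)
    (hdisj : Pairwise (Function.onFun (AEDisjoint μ) s)) :
    Orthonormal 𝕜 fun i =>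
      indicatorConstLp 2 (hs i) ((hμs i).trans_ne ENNReal.one_ne_top) (1 : 𝕜) := by
  classical
  refine orthonormal_iff_ite.mpr fun i j => ?_
  rw [L2.inner_indicatorConstLp_one_indicatorConstLp_one (hs i) (hs j)
    ((hμs i).trans_ne ENNReal.one_ne_top) ((hμs j).trans_ne ENNReal.one_ne_top)]
  split_ifs with hij
  · simp [← hij, measureReal_def, hμs]
  · have inter_null : μ (s i ∩ s j) = 0 := hdisj hij
    simp [measureReal_def, inter_null]

lemma pairwise_aedisjoint_Icc_intCast (μ : Measure ℝ) [NullSingletonClass μ] :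
    Pairwise (Function.onFun (AEDisjoint μ) fun m : ℤ => Set.Icc (m : ℝ) (m + 1)) :=
  fun _ _ hne => (Set.pairwise_disjoint_Ico_intCast ℝ hne).aedisjoint.congr
    Ico_ae_eq_Icc.symm Ico_ae_eq_Icc.symm

lemma orthonormal_ind_intCast : Orthonormal ℝ fun m : ℤ => ind m (m + 1) :=
  orthonormal_indicatorConstLp_one ℝ (fun _ => measurableSet_Icc) (by simp)
    (pairwise_aedisjoint_Icc_intCast volume)

lemma orthonormal_ind_neg_natCast : Orthonormal ℝ fun k : ℕ => ind (-(k : ℝ)) (-(k : ℝ) + 1) := by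
  have neg_cast_injective : Function.Injective fun k : ℕ => -(k : ℤ) :=
    neg_injective.comp Nat.cast_injective
  simpa [Function.comp_def] using orthonormal_ind_intCast.comp _ neg_cast_injective

end UnitIntervals

section Translation

lemma compMeasurePreserving_add_right_ind (h a b : ℝ) :
    Lp.compMeasurePreserving (· + h) (measurePreserving_add_right volume h) (ind a b) =
      ind (a - h) (b - h) := by
  simp only [ind, Lp.indicatorConstLp_compMeasurePreserving, Set.preimage_add_const_Icc]

variable {A : Lp ℝ 2 (volume : Measure ℝ) →L[ℝ] Lp ℝ 2 (volume : Measure ℝ)} {h : ℝ}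

lemma translation_apply_ind
    (hA : ∀ f : Lp ℝ 2 (volume : Measure ℝ), (A f : ℝ → ℝ) =ᵐ[volume] fun x => f (x + h))
    (a b : ℝ) : A (ind a b) = ind (a - h) (b - h) := by
  rw [← compMeasurePreserving_add_right_ind]
  exact Lp.ext ((hA _).trans (Lp.coeFn_compMeasurePreserving _ _).symm)

lemma translation_pow_apply_ind
    (hA : ∀ f : Lp ℝ 2 (volume : Measure ℝ), (A f : ℝ → ℝ) =ᵐ[volume] fun x => f (x + h))
    (k : ℕ) (a b : ℝ) : (A ^ k) (ind a b) = ind (a - k * h) (b - k * h) := by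
  induction k with
  | zero => simp
  | succ k ih =>
    rw [pow_succ', mul_apply_eq_comp, ih, translation_apply_ind hA]
    congr 1 <;> push_cast <;> ring

end Translation

/-- Every real polynomial is liftable with respect to the shift semigroup on `L²(ℝ)`: for any
`n ∈ ℕ` and real coefficients `c_0, …, c_n`, setting `g := ∑_{k=0}^n k! c_k 1_{[-k,-k+1]}`, one
has `∑_{k=0}^n c_k t^k = ⟨g, exp(tA) 1_{[0,1]}⟩` for every real `t`.  In particular, the
Bernstein polynomial `K_n(t) = ∑_{k=0}^n κ_{n,k} t^k` of a function `K` satisfies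
`K_n(t) = ⟨g_n, exp(tA) 1_{[0,1]}⟩` with `g_n := ∑_{k=0}^n k! κ_{n,k} 1_{[-k,-k+1]}`. -/
theorem polynomial_liftable
    (A : Lp ℝ 2 (volume : Measure ℝ) →L[ℝ] Lp ℝ 2 (volume : Measure ℝ))
    (hA : ∀ f : Lp ℝ 2 (volume : Measure ℝ), (A f : ℝ → ℝ) =ᵐ[volume] fun x => f (x + 1)) :
    (∀ (n : ℕ) (c : ℕ → ℝ) (t : ℝ),
      ∑ k ∈ Finset.range (n + 1), c k * t ^ k =
        (inner ℝ (∑ k ∈ Finset.range (n + 1),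
            ((k.factorial : ℝ) * c k) • ind (-(k : ℝ)) (-(k : ℝ) + 1))
          (NormedSpace.exp (t • A) (ind 0 1)) : ℝ)) ∧
    (∀ (T : ℝ) (K : ℝ → ℝ) (n : ℕ) (t : ℝ),
      ∑ k ∈ Finset.range (n + 1), bernsteinCoeff T K n k * t ^ k =
        (inner ℝ (∑ k ∈ Finset.range (n + 1),
            ((k.factorial : ℝ) * bernsteinCoeff T K n k) • ind (-(k : ℝ)) (-(k : ℝ) + 1))
          (NormedSpace.exp (t • A) (ind 0 1)) : ℝ)) := by
  have orbit_eq (k : ℕ) : (A ^ k) (ind 0 1) = ind (-(k : ℝ)) (-(k : ℝ) + 1) := by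
    rw [translation_pow_apply_ind hA, mul_one, zero_sub, sub_eq_neg_add]
  have orbit_orthonormal : Orthonormal ℝ fun k : ℕ => (A ^ k) (ind 0 1) := by
    simpa only [orbit_eq] using orthonormal_ind_neg_natCast
  have liftable (n : ℕ) (c : ℕ → ℝ) (t : ℝ) :=
    inner_sum_factorial_smul_pow_apply_exp_smul_apply orbit_orthonormal
      (Finset.range (n + 1)) c t
  simp only [orbit_eq, conj_trivial] at liftable
  exact ⟨fun n c t => (liftable n c t).symm,
    fun T K n t => (liftable n (bernsteinCoeff T K n) t).symm⟩
end

section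
/- Let T > 0, β ∈ ℝ, K ∈ L²([0,T]) and v ∈ L²([0,T]). Then there exists a unique (up to almost-everywhere equality) function x ∈ L²([0,T]) satisfying the linear Volterra integral equation of the second kind x(t) = v(t) − β·∫_0^t K(t−s)·x(s) ds for almost every t ∈ [0,T]. -/
open MeasureTheory

/-!
A Volterra operator `V x t = ∫ s in a..t, k t s (x s)` whose kernel rows are bounded in `L^q` by `C`
satisfies, by Hölder, `‖V x t‖ ^ p ≤ C ^ p * ∫ s in a..t, ‖x s‖ ^ p`. Because the right-hand side
only sees `x` up to time `t`, iterating produces the volume of a simplex: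
`‖V ^ n‖ ^ p ≤ (C ^ p * (b - a)) ^ n / n!`. Hence some power of `V` has norm less than one, and
`1 - V` divides the invertible operator `1 - V ^ n`.
-/

open Set Function Filter
open scoped ENNReal NNReal Nat

lemma isUnit_one_sub_of_norm_pow_lt_one {R : Type*} [NormedRing R] [HasSummableGeomSeries R]
    {a : R} {n : ℕ} (h : ‖a ^ n‖ < 1) : IsUnit (1 - a) := by
  have comm : Commute (1 - a) (∑ i ∈ Finset.range n, a ^ i) :=
    (mul_neg_geom_sum a n).trans (geom_sum_mul_neg a n).symm
  refine (comm.isUnit_mul_iff.1 ?_).1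
  rw [mul_neg_geom_sum]
  exact isUnit_one_sub_of_norm_lt_one h

lemma lintegral_Ioc_ofReal_sub_pow_div_factorial {a t : ℝ} (hat : a ≤ t) (n : ℕ) :
    ∫⁻ s in Ioc a t, ENNReal.ofReal ((s - a) ^ n / n !) =
      ENNReal.ofReal ((t - a) ^ (n + 1) / (n + 1)!) := by
  have integral_eq : ∫ s in a..t, (s - a) ^ n / n ! = (t - a) ^ (n + 1) / (n + 1)! := by
    rw [intervalIntegral.integral_div, intervalIntegral.integral_comp_sub_right (· ^ n),
      integral_pow, sub_self, zero_pow n.succ_ne_zero, sub_zero, div_div, Nat.factorial_succ]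
    push_cast
    rfl
  have integrable : IntegrableOn (fun s => (s - a) ^ n / n !) (Ioc a t) :=
    (Continuous.integrableOn_Icc (by fun_prop)).mono_set Ioc_subset_Icc_self
  rw [← integral_eq, intervalIntegral.integral_of_le hat,
    ofReal_integral_eq_lintegral_ofReal integrable]
  filter_upwards [ae_restrict_mem measurableSet_Ioc] with s hs
  have : 0 ≤ s - a := sub_nonneg.2 hs.1.le
  exact div_nonneg (pow_nonneg this n) (Nat.cast_nonneg _)

lemma lintegral_Ioc_le_of_le_mul_lintegral_Ioc {f : ℕ → ℝ → ℝ≥0∞} {A : ℝ≥0∞} {a b : ℝ}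
    (hf : ∀ n, ∀ᵐ t ∂volume.restrict (Ioc a b), f (n + 1) t ≤ A * ∫⁻ s in Ioc a t, f n s)
    (n : ℕ) {t : ℝ} (ht : t ∈ Icc a b) :
    ∫⁻ s in Ioc a t, f n s ≤
      A ^ n * (∫⁻ s in Ioc a b, f 0 s) * ENNReal.ofReal ((t - a) ^ n / n !) := by
  induction n generalizing t with
  | zero => simpa using lintegral_mono_set (Ioc_subset_Ioc_right ht.2)
  | succ n ih =>
    have hsub : Ioc a t ⊆ Ioc a b := Ioc_subset_Ioc_right ht.2
    calc ∫⁻ s in Ioc a t, f (n + 1) s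
      _ ≤ ∫⁻ s in Ioc a t,
            A ^ (n + 1) * (∫⁻ r in Ioc a b, f 0 r) * ENNReal.ofReal ((s - a) ^ n / n !) := by
          refine lintegral_mono_ae ?_
          filter_upwards [ae_restrict_of_ae_restrict_of_subset hsub (hf n),
            ae_restrict_mem measurableSet_Ioc] with s hs hst
          refine hs.trans ?_
          rw [pow_succ', mul_assoc, mul_assoc, ← mul_assoc (A ^ n)]
          gcongr
          exact ih (Ioc_subset_Icc_self (hsub hst))
      _ = _ := by
          rw [lintegral_const_mul _ (by fun_prop), lintegral_Ioc_ofReal_sub_pow_div_factorial ht.1]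

lemma eLpNorm_rpow_toReal_eq_lintegral {α ε : Type*} [MeasurableSpace α] [ENorm ε]
    {μ : Measure α} {p : ℝ≥0∞} (hp₀ : p ≠ 0) (hp : p ≠ ∞) (f : α → ε) :
    eLpNorm f p μ ^ p.toReal = ∫⁻ t, ‖f t‖ₑ ^ p.toReal ∂μ := by
  lift p to ℝ≥0 using hp
  exact eLpNorm_nnreal_pow_eq_lintegral (by simpa using hp₀)

lemma eLpNorm_restrict_le_enorm_Lp {α E : Type*} [MeasurableSpace α] [NormedAddCommGroup E]
    {μ : Measure α} {p : ℝ≥0∞} {s t : Set α} (hst : s ⊆ t) (x : Lp E p (μ.restrict t)) :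
    eLpNorm x p (μ.restrict s) ≤ ‖x‖ₑ := by
  rw [Lp.enorm_def]
  exact eLpNorm_mono_measure _ (Measure.restrict_mono_set _ hst)

variable {E F : Type*} [NormedAddCommGroup E] [NormedSpace ℝ E] [NormedAddCommGroup F]
  [NormedSpace ℝ F] {a b : ℝ} {p q : ℝ≥0∞} {C : ℝ≥0}

/-- The Volterra integral `∫ₐᵗ k(t, s) x(s) ds` of a function `x` against an operator-valued
kernel `k`, as a function of `t`. -/
noncomputable def volterraIntegral (a : ℝ) (k : ℝ → ℝ → E →L[ℝ] F) (x : ℝ → E) (t : ℝ) : F :=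
  ∫ s in Ioc a t, k t s (x s)

lemma volterraIntegral_congr_ae {k : ℝ → ℝ → E →L[ℝ] F} {x y : ℝ → E}
    (hxy : x =ᵐ[volume.restrict (Icc a b)] y) {t : ℝ} (ht : t ∈ Icc a b) :
    volterraIntegral a k x t = volterraIntegral a k y t := by
  have hsub : Ioc a t ⊆ Icc a b := Ioc_subset_Icc_self.trans (Icc_subset_Icc_right ht.2)
  refine integral_congr_ae ?_
  filter_upwards [ae_restrict_of_ae_restrict_of_subset hsub hxy] with s hs
  rw [hs]

lemma volterraIntegral_smul (c : ℝ) (k : ℝ → ℝ → E →L[ℝ] F) (x : ℝ → E) (t : ℝ) :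
    volterraIntegral a k (c • x) t = c • volterraIntegral a k x t := by
  simp only [volterraIntegral, Pi.smul_apply, map_smul, integral_smul]

lemma stronglyMeasurable_kernel_apply {k : ℝ → ℝ → E →L[ℝ] F} {x : ℝ → E}
    (hk : StronglyMeasurable (uncurry k)) (hx : StronglyMeasurable x) :
    StronglyMeasurable fun z : ℝ × ℝ => k z.1 z.2 (x z.2) :=
  isBoundedBilinearMap_apply.continuous.comp_stronglyMeasurable
    (hk.prodMk (hx.comp_measurable measurable_snd))

lemma stronglyMeasurable_volterraIntegral {k : ℝ → ℝ → E →L[ℝ] F} {x : ℝ → E}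
    (hk : StronglyMeasurable (uncurry k)) (hx : StronglyMeasurable x) :
    StronglyMeasurable (volterraIntegral a k x) := by
  have eq_integral_indicator : volterraIntegral a k x = fun t =>
      ∫ s, {z : ℝ × ℝ | a < z.2 ∧ z.2 ≤ z.1}.indicator (fun z => k z.1 z.2 (x z.2)) (t, s) := by
    ext t
    rw [volterraIntegral, ← integral_indicator measurableSet_Ioc]
    rfl
  have measurableSet_triangle : MeasurableSet {z : ℝ × ℝ | a < z.2 ∧ z.2 ≤ z.1} :=
    (measurableSet_lt measurable_const measurable_snd).inter
      (measurableSet_le measurable_snd measurable_fst)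
  rw [eq_integral_indicator]
  exact ((stronglyMeasurable_kernel_apply hk hx).indicator
    measurableSet_triangle).integral_prod_right'

/-- Kernels on the triangle `a < s ≤ t ≤ b` whose rows `k t` are bounded by `C` in `L^q`, uniformly
in `t`. They act on `L^p([a, b])` for the exponent `p` conjugate to `q`. Measurability is imposed on
the whole plane, values outside the triangle being otherwise irrelevant. -/
structure IsVolterraKernel (k : ℝ → ℝ → E →L[ℝ] F) (a b : ℝ) (q : ℝ≥0∞) (C : ℝ≥0) : Prop where
  stronglyMeasurable_uncurry : StronglyMeasurable (uncurry k)
  eLpNorm_le : ∀ t ∈ Icc a b, eLpNorm (k t) q (volume.restrict (Ioc a t)) ≤ C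

lemma isVolterraKernel_comp_sub {K : ℝ → E →L[ℝ] F} (hK : StronglyMeasurable K)
    (hKq : MemLp K q (volume.restrict (Icc 0 (b - a)))) :
    IsVolterraKernel (fun t s => K (t - s)) a b q
      (eLpNorm K q (volume.restrict (Icc 0 (b - a)))).toNNReal where
  stronglyMeasurable_uncurry := hK.comp_measurable (measurable_fst.sub measurable_snd)
  eLpNorm_le t ht := by
    rw [ENNReal.coe_toNNReal hKq.eLpNorm_ne_top]
    have reflection : MeasurePreserving (t - ·)
        (volume.restrict ((t - ·) ⁻¹' Icc 0 (b - a))) (volume.restrict (Icc 0 (b - a))) :=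
      (volume.measurePreserving_sub_left t).restrict_preimage measurableSet_Icc
    have hsub : Ioc a t ⊆ (t - ·) ⁻¹' Icc 0 (b - a) := fun s hs =>
      ⟨sub_nonneg.2 hs.2, sub_le_sub ht.2 hs.1.le⟩
    calc eLpNorm (K ∘ (t - ·)) q (volume.restrict (Ioc a t))
      _ ≤ eLpNorm (K ∘ (t - ·)) q (volume.restrict ((t - ·) ⁻¹' Icc 0 (b - a))) :=
          eLpNorm_mono_measure _ (Measure.restrict_mono_set _ hsub)
      _ = eLpNorm K q (volume.restrict (Icc 0 (b - a))) :=
          eLpNorm_comp_measurePreserving hKq.1 reflection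

lemma isVolterraKernel_comp_sub_smul_id {K : ℝ → ℝ} (hK : StronglyMeasurable K)
    (hKq : MemLp K q (volume.restrict (Icc 0 (b - a)))) :
    IsVolterraKernel (fun t s => K (t - s) • ContinuousLinearMap.id ℝ E) a b q
      (eLpNorm (fun r => K r • ContinuousLinearMap.id ℝ E) q
        (volume.restrict (Icc 0 (b - a)))).toNNReal :=
  isVolterraKernel_comp_sub (hK.smul_const _)
    ((ContinuousLinearMap.toSpanSingleton ℝ (ContinuousLinearMap.id ℝ E)).comp_memLp' hKq)

namespace IsVolterraKernel

section Integral

variable {k : ℝ → ℝ → E →L[ℝ] F}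

lemma lintegral_enorm_apply_le (hk : IsVolterraKernel k a b q C) [q.HolderConjugate p] {x : ℝ → E}
    (hx : StronglyMeasurable x) {t : ℝ} (ht : t ∈ Icc a b) :
    ∫⁻ s in Ioc a t, ‖k t s (x s)‖ₑ ≤ C * eLpNorm x p (volume.restrict (Ioc a t)) := by
  have hkt : StronglyMeasurable (k t) :=
    hk.stronglyMeasurable_uncurry.comp_measurable measurable_prodMk_left
  have holder := eLpNorm_le_eLpNorm_mul_eLpNorm'_of_norm (p := q) (q := p) (r := 1)
    (μ := volume.restrict (Ioc a t)) hkt.aestronglyMeasurable hx.aestronglyMeasurable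
    (fun A y => A y) 1 (.of_forall fun s => by simpa using (k t s).le_opNorm (x s))
  rw [eLpNorm_one_eq_lintegral_enorm, ENNReal.coe_one, one_mul] at holder
  exact holder.trans (mul_le_mul_left (hk.eLpNorm_le t ht) _)

lemma enorm_volterraIntegral_le (hk : IsVolterraKernel k a b q C) [q.HolderConjugate p] {x : ℝ → E}
    (hx : StronglyMeasurable x) {t : ℝ} (ht : t ∈ Icc a b) :
    ‖volterraIntegral a k x t‖ₑ ≤ C * eLpNorm x p (volume.restrict (Ioc a t)) :=
  (enorm_integral_le_lintegral_enorm _).trans (hk.lintegral_enorm_apply_le hx ht)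

variable [Fact (1 ≤ p)] [q.HolderConjugate p]

lemma lintegral_enorm_apply_le_enorm_Lp (hk : IsVolterraKernel k a b q C)
    (x : Lp E p (volume.restrict (Icc a b))) {t : ℝ} (ht : t ∈ Icc a b) :
    ∫⁻ s in Ioc a t, ‖k t s (x s)‖ₑ ≤ C * ‖x‖ₑ :=
  (hk.lintegral_enorm_apply_le (Lp.stronglyMeasurable x) ht).trans <| by
    gcongr
    exact eLpNorm_restrict_le_enorm_Lp (Ioc_subset_Icc_self.trans (Icc_subset_Icc_right ht.2)) x

lemma integrableOn_apply (hk : IsVolterraKernel k a b q C)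
    (x : Lp E p (volume.restrict (Icc a b))) {t : ℝ} (ht : t ∈ Icc a b) :
    IntegrableOn (fun s => k t s (x s)) (Ioc a t) :=
  ⟨((stronglyMeasurable_kernel_apply hk.stronglyMeasurable_uncurry
      (Lp.stronglyMeasurable x)).comp_measurable measurable_prodMk_left).aestronglyMeasurable,
    (hk.lintegral_enorm_apply_le_enorm_Lp x ht).trans_lt
      (ENNReal.mul_lt_top ENNReal.coe_lt_top enorm_lt_top)⟩

lemma norm_volterraIntegral_le (hk : IsVolterraKernel k a b q C)
    (x : Lp E p (volume.restrict (Icc a b))) {t : ℝ} (ht : t ∈ Icc a b) :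
    ‖volterraIntegral a k x t‖ ≤ C * ‖x‖ := by
  have enorm_le : ‖volterraIntegral a k x t‖ₑ ≤ C * ‖x‖ₑ :=
    (enorm_integral_le_lintegral_enorm _).trans (hk.lintegral_enorm_apply_le_enorm_Lp x ht)
  simp only [enorm_eq_nnnorm] at enorm_le
  exact_mod_cast enorm_le

lemma memLp_volterraIntegral (hk : IsVolterraKernel k a b q C)
    (x : Lp E p (volume.restrict (Icc a b))) :
    MemLp (volterraIntegral a k x) p (volume.restrict (Icc a b)) :=
  .of_bound (stronglyMeasurable_volterraIntegral hk.stronglyMeasurable_uncurry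
    (Lp.stronglyMeasurable x)).aestronglyMeasurable
    (C * ‖x‖) <| ae_restrict_of_forall_mem measurableSet_Icc fun _ ht =>
      hk.norm_volterraIntegral_le x ht

lemma volterraIntegral_add (hk : IsVolterraKernel k a b q C)
    (x y : Lp E p (volume.restrict (Icc a b))) {t : ℝ} (ht : t ∈ Icc a b) :
    volterraIntegral a k (x + y : Lp E p (volume.restrict (Icc a b))) t =
      volterraIntegral a k x t + volterraIntegral a k y t := by
  rw [volterraIntegral_congr_ae (Lp.coeFn_add x y) ht]
  simp only [volterraIntegral, Pi.add_apply, map_add]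
  exact integral_add (hk.integrableOn_apply x ht) (hk.integrableOn_apply y ht)

/-- The operator `x ↦ ∫ₐᵗ k(t, s) x(s) ds` on `L^p([a, b])`, for a kernel with rows in `L^q` and
`p` conjugate to `q`. -/
noncomputable def volterraOperator (hk : IsVolterraKernel k a b q C) :
    Lp E p (volume.restrict (Icc a b)) →L[ℝ] Lp F p (volume.restrict (Icc a b)) :=
  LinearMap.mkContinuous
    { toFun x := (hk.memLp_volterraIntegral x).toLp _
      map_add' x y := by
        rw [← MemLp.toLp_add, MemLp.toLp_eq_toLp_iff]
        exact ae_restrict_of_forall_mem measurableSet_Icc fun t ht =>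
          hk.volterraIntegral_add x y ht
      map_smul' c x := by
        rw [RingHom.id_apply, ← MemLp.toLp_const_smul, MemLp.toLp_eq_toLp_iff]
        exact ae_restrict_of_forall_mem measurableSet_Icc fun t ht =>
          (volterraIntegral_congr_ae (Lp.coeFn_smul c x) ht).trans (volterraIntegral_smul c k x t) }
    (measureUnivNNReal (volume.restrict (Icc a b)) ^ p.toReal⁻¹ * C) fun x => by
      rw [mul_assoc]
      refine Lp.norm_le_of_ae_bound (by positivity) ?_
      filter_upwards [(hk.memLp_volterraIntegral x).coeFn_toLp,
        ae_restrict_mem measurableSet_Icc] with t hVx ht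
      exact hVx ▸ hk.norm_volterraIntegral_le x ht

lemma coeFn_volterraOperator (hk : IsVolterraKernel k a b q C)
    (x : Lp E p (volume.restrict (Icc a b))) :
    hk.volterraOperator x =ᵐ[volume.restrict (Icc a b)] volterraIntegral a k x :=
  (hk.memLp_volterraIntegral x).coeFn_toLp

lemma enorm_volterraOperator_rpow_le (hp : p ≠ ∞) (hk : IsVolterraKernel k a b q C)
    (x : Lp E p (volume.restrict (Icc a b))) :
    ∀ᵐ t ∂volume.restrict (Icc a b), ‖hk.volterraOperator x t‖ₑ ^ p.toReal ≤
      (C : ℝ≥0∞) ^ p.toReal * ∫⁻ s in Ioc a t, ‖x s‖ₑ ^ p.toReal := by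
  filter_upwards [hk.coeFn_volterraOperator x, ae_restrict_mem measurableSet_Icc] with t hVx ht
  have hp₀ : p ≠ 0 := (zero_lt_one.trans_le Fact.out).ne'
  calc ‖hk.volterraOperator x t‖ₑ ^ p.toReal
    _ ≤ (C * eLpNorm x p (volume.restrict (Ioc a t))) ^ p.toReal := by
        rw [hVx]
        gcongr
        exact hk.enorm_volterraIntegral_le (Lp.stronglyMeasurable x) ht
    _ = _ := by
        rw [ENNReal.mul_rpow_of_nonneg _ _ ENNReal.toReal_nonneg,
          eLpNorm_rpow_toReal_eq_lintegral hp₀ hp]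

end Integral

section Endomorphism

variable {k : ℝ → ℝ → E →L[ℝ] E} [Fact (1 ≤ p)] [q.HolderConjugate p]

lemma enorm_volterraOperator_pow_rpow_le (hab : a ≤ b) (hp : p ≠ ∞)
    (hk : IsVolterraKernel k a b q C) (n : ℕ) (x : Lp E p (volume.restrict (Icc a b))) :
    ‖(hk.volterraOperator ^ n) x‖ₑ ^ p.toReal ≤
      ((C : ℝ≥0∞) ^ p.toReal) ^ n * ‖x‖ₑ ^ p.toReal * ENNReal.ofReal ((b - a) ^ n / n !) := by
  have hp₀ : p ≠ 0 := (zero_lt_one.trans_le Fact.out).ne'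
  have enorm_rpow (y : Lp E p (volume.restrict (Icc a b))) :
      ‖y‖ₑ ^ p.toReal = ∫⁻ s in Ioc a b, ‖y s‖ₑ ^ p.toReal := by
    rw [Lp.enorm_def, eLpNorm_rpow_toReal_eq_lintegral hp₀ hp, setLIntegral_congr Ioc_ae_eq_Icc]
  rw [enorm_rpow, enorm_rpow]
  refine lintegral_Ioc_le_of_le_mul_lintegral_Ioc
    (f := fun n s => ‖(hk.volterraOperator ^ n) x s‖ₑ ^ p.toReal) (fun n => ?_) n
    (right_mem_Icc.2 hab)
  rw [pow_succ']
  exact ae_restrict_of_ae_restrict_of_subset Ioc_subset_Icc_self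
    (hk.enorm_volterraOperator_rpow_le hp ((hk.volterraOperator ^ n) x))

lemma norm_volterraOperator_pow_le (hab : a ≤ b) (hp : p ≠ ∞) (hk : IsVolterraKernel k a b q C)
    (n : ℕ) :
    ‖(hk.volterraOperator : Lp E p (volume.restrict (Icc a b)) →L[ℝ] _) ^ n‖ ≤
      (((C : ℝ) ^ p.toReal * (b - a)) ^ n / n !) ^ p.toReal⁻¹ := by
  have hp_pos : 0 < p.toReal := ENNReal.toReal_pos (zero_lt_one.trans_le Fact.out).ne' hp
  have : 0 ≤ b - a := sub_nonneg.2 hab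
  refine ContinuousLinearMap.opNorm_le_bound _ (by positivity) fun x => ?_
  have rpow_le : ‖(hk.volterraOperator ^ n) x‖ ^ p.toReal ≤
      ((C : ℝ) ^ p.toReal) ^ n * ‖x‖ ^ p.toReal * ((b - a) ^ n / n !) := by
    have toReal_le :=
      ENNReal.toReal_mono (by finiteness) (hk.enorm_volterraOperator_pow_rpow_le hab hp n x)
    rwa [ENNReal.toReal_mul, ENNReal.toReal_mul, ENNReal.toReal_pow, ← ENNReal.toReal_rpow,
      ← ENNReal.toReal_rpow, ← ENNReal.toReal_rpow, ENNReal.toReal_ofReal (by positivity),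
      toReal_enorm, toReal_enorm, ENNReal.coe_toReal] at toReal_le
  refine (Real.rpow_le_rpow_iff (norm_nonneg _) (by positivity) hp_pos).1 (rpow_le.trans_eq ?_)
  rw [Real.mul_rpow (by positivity) (norm_nonneg x), Real.rpow_inv_rpow (by positivity) hp_pos.ne',
    mul_pow]
  ring

lemma isUnit_one_sub_volterraOperator [CompleteSpace E] (hab : a ≤ b) (hp : p ≠ ∞)
    (hk : IsVolterraKernel k a b q C) :
    IsUnit (1 - hk.volterraOperator :
      Lp E p (volume.restrict (Icc a b)) →L[ℝ] Lp E p (volume.restrict (Icc a b))) := by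
  have hp_pos : 0 < p.toReal := ENNReal.toReal_pos (zero_lt_one.trans_le Fact.out).ne' hp
  obtain ⟨n, hn⟩ := ((FloorSemiring.tendsto_pow_div_factorial_atTop
    ((C : ℝ) ^ p.toReal * (b - a))).eventually_lt_const zero_lt_one).exists
  have : 0 ≤ b - a := sub_nonneg.2 hab
  refine isUnit_one_sub_of_norm_pow_lt_one
    ((hk.norm_volterraOperator_pow_le hab hp n).trans_lt ?_)
  exact Real.rpow_lt_one (by positivity) hn (inv_pos.2 hp_pos)

lemma one_sub_volterraOperator_apply_eq_iff (hk : IsVolterraKernel k a b q C)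
    (x v : Lp E p (volume.restrict (Icc a b))) :
    (1 - hk.volterraOperator) x = v ↔
      ∀ᵐ t ∂volume.restrict (Icc a b), x t = v t + volterraIntegral a k x t := by
  rw [sub_apply, one_apply_eq_self, sub_eq_iff_eq_add, Lp.ext_iff]
  refine eventually_congr ?_
  filter_upwards [Lp.coeFn_add v (hk.volterraOperator x), hk.coeFn_volterraOperator x]
    with t hadd hVx
  rw [hadd, Pi.add_apply, hVx]

end Endomorphism

end IsVolterraKernel

theorem volterra_second_kind_existence_uniqueness_general [CompleteSpace E] [Fact (1 ≤ p)]
    [q.HolderConjugate p] (hab : a ≤ b) (hp : p ≠ ∞) {k : ℝ → ℝ → E →L[ℝ] E}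
    (hk : IsVolterraKernel k a b q C) (v : Lp E p (volume.restrict (Icc a b))) :
    ∃! x : Lp E p (volume.restrict (Icc a b)),
      ∀ᵐ t ∂volume.restrict (Icc a b), x t = v t + ∫ s in Ioc a t, k t s (x s) := by
  have bijective := ContinuousLinearMap.isUnit_iff_bijective.1
    (hk.isUnit_one_sub_volterraOperator hab hp)
  simpa only [hk.one_sub_volterraOperator_apply_eq_iff, volterraIntegral] using
    bijective.existsUnique v

/-- For `T > 0`, `β ∈ ℝ` and `K, v ∈ L²([0,T])`, there exists a unique (up to a.e. equality)
`x ∈ L²([0,T])` satisfying the linear Volterra integral equation of the second kind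
`x(t) = v(t) − β ∫_0^t K(t−s) x(s) ds` for almost every `t ∈ [0,T]`. -/
theorem volterra_second_kind_existence_uniqueness
    (T : ℝ) (hT : 0 < T) (β : ℝ)
    (K v : Lp ℝ 2 (volume.restrict (Set.Icc (0 : ℝ) T))) :
    ∃! x : Lp ℝ 2 (volume.restrict (Set.Icc (0 : ℝ) T)),
      ∀ᵐ t ∂(volume.restrict (Set.Icc (0 : ℝ) T)),
        x t = v t - β * ∫ s in Set.Ioc (0 : ℝ) t, K (t - s) * x s := by
  have kernel := isVolterraKernel_comp_sub_smul_id (E := ℝ) (a := 0) (b := T)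
    ((Lp.stronglyMeasurable K).const_smul (-β)) (by simpa using (Lp.memLp K).const_smul (-β))
  simpa [mul_assoc, integral_const_mul, integral_neg, sub_eq_add_neg] using
    volterra_second_kind_existence_uniqueness_general hT.le ENNReal.ofNat_ne_top kernel v
end

section
/- For every real λ ≥ 0 and every natural number M with M ≥ λ, the Poisson tail satisfies e^{−λ}·Σ_{k=M+1}^∞ λ^k/k! ≤ 1 − e^{−λ/(M+1)}; equivalently, Σ_{k=M+1}^∞ λ^k/k! ≤ e^{λ}·(1 − e^{−λ/(M+1)}). -/
/-!
Let `F n t` be the probability that a Poisson variable of parameter `t` is less than `n`; the claim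
is `exp (-t / n) ≤ F n t` for `n = M + 1`. Since `log (F n)` is concave and vanishes at `0`, it
suffices to treat the right endpoint `t = n`, that is, to show `exp (-1) ≤ F n n`. There is equality
for `n = 1`, and `F n n` is nondecreasing in `n`: passing from `(n, n)` to `(n + 1, n)` adds the
probability of the value `n` at parameter `n`, and increasing the parameter to `n + 1` loses at most
that much, because this probability is maximal at parameter `n`.
-/

open Set

/-- The probability of the value `n` under the Poisson distribution of parameter `t`. The formula is
taken for every real `t`, so that it can be differentiated in the parameter. -/
noncomputable def poissonProb (n : ℕ) (t : ℝ) : ℝ :=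
  Real.exp (-t) * t ^ n / n.factorial

/-- The probability that a Poisson variable of parameter `t` is strictly less than `n`, extended
to all real `t` by the same formula. -/
noncomputable def poissonProbLT (n : ℕ) (t : ℝ) : ℝ :=
  ∑ k ∈ Finset.range n, poissonProb k t

theorem poissonProb_nonneg (n : ℕ) {t : ℝ} (ht : 0 ≤ t) : 0 ≤ poissonProb n t := by
  unfold poissonProb
  positivity

theorem poissonProb_le_poissonProb_self (n : ℕ) {t : ℝ} (ht : 0 ≤ t) :
    poissonProb n t ≤ poissonProb n n := by
  have pow_le : t ^ n ≤ n ^ n * Real.exp (t - n) := by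
    rcases n.eq_zero_or_pos with rfl | hn
    · simpa using ht
    calc t ^ n = n ^ n * (1 - (n - t) / n) ^ n := by
          rw [← mul_pow]
          field_simp
          ring
      _ ≤ n ^ n * Real.exp (-(n - t)) := by
          gcongr
          exact Real.one_sub_div_pow_le_exp_neg (by linarith)
      _ = n ^ n * Real.exp (t - n) := by rw [neg_sub]
  unfold poissonProb
  gcongr ?_ / _
  calc Real.exp (-t) * t ^ n ≤ Real.exp (-t) * (n ^ n * Real.exp (t - n)) := by gcongr
    _ = Real.exp (-t + (t - n)) * n ^ n := by
        rw [Real.exp_add]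
        ring
    _ = Real.exp (-n) * n ^ n := by ring_nf

theorem poissonProb_mul_le_poissonProb_mul {k n : ℕ} (hkn : k ≤ n) {s t : ℝ} (hs : 0 ≤ s)
    (hst : s ≤ t) : poissonProb n s * poissonProb k t ≤ poissonProb n t * poissonProb k s := by
  have ht : 0 ≤ t := hs.trans hst
  obtain ⟨j, rfl⟩ := Nat.exists_eq_add_of_le hkn
  calc poissonProb (k + j) s * poissonProb k t
      = Real.exp (-s) * Real.exp (-t) * (s * t) ^ k / ((k + j).factorial * k.factorial) *
          s ^ j := by
        unfold poissonProb
        ring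
    _ ≤ Real.exp (-s) * Real.exp (-t) * (s * t) ^ k / ((k + j).factorial * k.factorial) *
          t ^ j := by
        gcongr
    _ = poissonProb (k + j) t * poissonProb k s := by
        unfold poissonProb
        ring

theorem hasDerivAt_poissonProb_succ (n : ℕ) (t : ℝ) :
    HasDerivAt (poissonProb (n + 1)) (poissonProb n t - poissonProb (n + 1) t) t := by
  refine (((hasDerivAt_neg t).exp.mul (hasDerivAt_pow (n + 1) t)).div_const
    ((n + 1).factorial : ℝ)).congr_deriv ?_
  simp only [poissonProb, Nat.factorial_succ, Nat.add_sub_cancel]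
  push_cast
  field_simp
  ring

theorem poissonProbLT_succ (n : ℕ) (t : ℝ) :
    poissonProbLT (n + 1) t = poissonProbLT n t + poissonProb n t :=
  Finset.sum_range_succ _ n

theorem poissonProbLT_one (t : ℝ) : poissonProbLT 1 t = Real.exp (-t) := by
  simp [poissonProbLT, poissonProb]

theorem poissonProbLT_succ_zero (n : ℕ) : poissonProbLT (n + 1) 0 = 1 := by
  simp [poissonProbLT, poissonProb, Finset.sum_range_succ']

theorem poissonProbLT_succ_pos (n : ℕ) {t : ℝ} (ht : 0 ≤ t) : 0 < poissonProbLT (n + 1) t := by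
  refine Finset.sum_pos' (fun k _ ↦ poissonProb_nonneg k ht) ⟨0, by simp, ?_⟩
  simpa [poissonProb] using Real.exp_pos (-t)

theorem hasDerivAt_poissonProbLT_succ (n : ℕ) (t : ℝ) :
    HasDerivAt (poissonProbLT (n + 1)) (-poissonProb n t) t := by
  induction n with
  | zero =>
    rw [funext poissonProbLT_one]
    simpa [poissonProb] using (hasDerivAt_neg t).exp
  | succ n ih =>
    rw [funext (poissonProbLT_succ (n + 1))]
    exact (ih.add (hasDerivAt_poissonProb_succ n t)).congr_deriv (by ring)

theorem monotoneOn_poissonProb_div_poissonProbLT (n : ℕ) :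
    MonotoneOn (fun t ↦ poissonProb n t / poissonProbLT (n + 1) t) (Ici 0) := by
  intro s hs t ht hst
  rw [mem_Ici] at hs ht
  refine (div_le_div_iff₀ (poissonProbLT_succ_pos n hs) (poissonProbLT_succ_pos n ht)).2 ?_
  simp only [poissonProbLT, Finset.mul_sum]
  exact Finset.sum_le_sum fun k hk ↦
    poissonProb_mul_le_poissonProb_mul (Nat.lt_succ_iff.1 (Finset.mem_range.1 hk)) hs hst

theorem concaveOn_log_poissonProbLT (n : ℕ) :
    ConcaveOn ℝ (Ici 0) fun t ↦ Real.log (poissonProbLT (n + 1) t) := by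
  have hasDerivAt_log : ∀ t ∈ Ici (0 : ℝ), HasDerivAt (fun t ↦ Real.log (poissonProbLT (n + 1) t))
      (-poissonProb n t / poissonProbLT (n + 1) t) t := fun t ht ↦
    (hasDerivAt_poissonProbLT_succ n t).log (poissonProbLT_succ_pos n ht).ne'
  refine AntitoneOn.concaveOn_of_deriv (convex_Ici 0)
    (fun t ht ↦ (hasDerivAt_log t ht).continuousAt.continuousWithinAt)
    (fun t ht ↦ (hasDerivAt_log t (interior_subset ht)).differentiableAt.differentiableWithinAt) ?_
  intro s hs t ht hst
  rw [(hasDerivAt_log s (interior_subset hs)).deriv, (hasDerivAt_log t (interior_subset ht)).deriv,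
    neg_div, neg_div]
  exact neg_le_neg
    (monotoneOn_poissonProb_div_poissonProbLT n (interior_subset hs) (interior_subset ht) hst)

theorem monotone_poissonProbLT_self : Monotone fun n : ℕ ↦ poissonProbLT n n := by
  refine monotone_nat_of_le_succ fun n ↦ ?_
  have loss_le : -poissonProb n n * ((n + 1 : ℕ) - n) ≤
      poissonProbLT (n + 1) (n + 1 : ℕ) - poissonProbLT (n + 1) n := by
    refine (convex_Ici 0).mul_sub_le_image_sub_of_le_deriv
      (fun t _ ↦ (hasDerivAt_poissonProbLT_succ n t).continuousAt.continuousWithinAt)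
      (fun t _ ↦ (hasDerivAt_poissonProbLT_succ n t).differentiableAt.differentiableWithinAt)
      (fun t ht ↦ ?_) n (mem_Ici.2 n.cast_nonneg) _ (mem_Ici.2 (n + 1).cast_nonneg) (by simp)
    rw [(hasDerivAt_poissonProbLT_succ n t).deriv]
    exact neg_le_neg (poissonProb_le_poissonProb_self n (interior_subset ht))
  rw [poissonProbLT_succ n n] at loss_le
  push_cast at loss_le ⊢
  linarith

theorem exp_neg_one_le_poissonProbLT_self {n : ℕ} (hn : 1 ≤ n) :
    Real.exp (-1) ≤ poissonProbLT n n := by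
  simpa [poissonProbLT_one] using monotone_poissonProbLT_self hn

theorem exp_neg_div_le_poissonProbLT (n : ℕ) {t : ℝ} (ht : 0 ≤ t) (htn : t ≤ n + 1) :
    Real.exp (-t / (n + 1)) ≤ poissonProbLT (n + 1) t := by
  have hn : (0 : ℝ) < n + 1 := by positivity
  have endpoint : -1 ≤ Real.log (poissonProbLT (n + 1) (n + 1)) := by
    rw [Real.le_log_iff_exp_le (poissonProbLT_succ_pos n hn.le)]
    exact_mod_cast exp_neg_one_le_poissonProbLT_self n.succ_pos
  have chord : t / (n + 1) * Real.log (poissonProbLT (n + 1) (n + 1)) ≤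
      Real.log (poissonProbLT (n + 1) t) := by
    have := (concaveOn_log_poissonProbLT n).2 self_mem_Ici (mem_Ici.2 hn.le)
      (sub_nonneg.2 ((div_le_one hn).2 htn)) (div_nonneg ht hn.le) (sub_add_cancel 1 (t / (n + 1)))
    simpa [poissonProbLT_succ_zero, div_mul_cancel₀ t hn.ne'] using this
  rw [← Real.le_log_iff_exp_le (poissonProbLT_succ_pos n ht)]
  calc -t / (n + 1) = t / (n + 1) * -1 := by ring
    _ ≤ t / (n + 1) * Real.log (poissonProbLT (n + 1) (n + 1)) := by gcongr
    _ ≤ Real.log (poissonProbLT (n + 1) t) := chord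

theorem exp_neg_mul_tsum_eq_one_sub_poissonProbLT (n : ℕ) (t : ℝ) :
    Real.exp (-t) * ∑' k : ℕ, t ^ (n + k) / ((n + k).factorial : ℝ) = 1 - poissonProbLT n t := by
  have exp_split : ∑ k ∈ Finset.range n, t ^ k / (k.factorial : ℝ) +
      ∑' k : ℕ, t ^ (n + k) / ((n + k).factorial : ℝ) = Real.exp t := by
    simp_rw [add_comm n]
    rw [(Real.summable_pow_div_factorial t).sum_add_tsum_nat_add n, Real.exp_eq_exp_ℝ,
      NormedSpace.exp_eq_tsum_div]
  have head : poissonProbLT n t =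
      Real.exp (-t) * ∑ k ∈ Finset.range n, t ^ k / (k.factorial : ℝ) := by
    simp only [poissonProbLT, poissonProb, Finset.mul_sum, mul_div_assoc]
  rw [eq_sub_iff_add_eq', head, ← mul_add, exp_split, ← Real.exp_add, neg_add_cancel, Real.exp_zero]

theorem poisson_tail_bound_general (lam : ℝ) (hlam : 0 ≤ lam) (M : ℕ) (hM : lam ≤ M + 1) :
    Real.exp (-lam) * (∑' k : ℕ, lam ^ (M + 1 + k) / ((M + 1 + k).factorial : ℝ)) ≤
        1 - Real.exp (-lam / (M + 1)) ∧
      (∑' k : ℕ, lam ^ (M + 1 + k) / ((M + 1 + k).factorial : ℝ)) ≤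
        Real.exp lam * (1 - Real.exp (-lam / (M + 1))) := by
  have normalized : Real.exp (-lam) *
      (∑' k : ℕ, lam ^ (M + 1 + k) / ((M + 1 + k).factorial : ℝ)) ≤
        1 - Real.exp (-lam / (M + 1)) := by
    rw [exp_neg_mul_tsum_eq_one_sub_poissonProbLT]
    exact sub_le_sub_left (exp_neg_div_le_poissonProbLT M hlam hM) 1
  refine ⟨normalized, ?_⟩
  rwa [Real.exp_neg, inv_mul_le_iff₀ (Real.exp_pos lam)] at normalized

/-- For every real `λ ≥ 0` and every natural `M ≥ λ`, the Poisson tail satisfies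
`e^{−λ} ∑_{k=M+1}^∞ λ^k/k! ≤ 1 − e^{−λ/(M+1)}`; equivalently,
`∑_{k=M+1}^∞ λ^k/k! ≤ e^{λ} (1 − e^{−λ/(M+1)})`. -/
theorem poisson_tail_bound (lam : ℝ) (hlam : 0 ≤ lam) (M : ℕ) (hM : lam ≤ M) :
    Real.exp (-lam) * (∑' k : ℕ, lam ^ (M + 1 + k) / ((M + 1 + k).factorial : ℝ)) ≤
        1 - Real.exp (-lam / (M + 1)) ∧
      (∑' k : ℕ, lam ^ (M + 1 + k) / ((M + 1 + k).factorial : ℝ)) ≤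
        Real.exp lam * (1 - Real.exp (-lam / (M + 1))) :=
  poisson_tail_bound_general lam hlam M (by linarith)
end

section
/- Let H be a real Hilbert space, B a bounded linear operator on H, ν ∈ H with ‖ν‖ = 1, g ∈ H, and s ≥ 0. If M ∈ ℕ satisfies M ≥ s·‖B‖, where ‖B‖ is the operator norm, then |⟨g, exp(sB)ν⟩ − ⟨g, Σ_{k=0}^M (s^k/k!)·B^k ν⟩| ≤ ‖g‖·e^{s‖B‖}·(1 − e^{−s‖B‖/(M+1)}). In particular, for the lifted optimal control û_n(t) := (α a₂/(2a₁))·⟨g_n, exp((T−t)Ā_n)ν⟩ and its truncation û_{n,M}(t) := (α a₂/(2a₁))·⟨g_n, Σ_{k=0}^M ((T−t)^k/k!)·Ā_n^k ν⟩, whenever M ≥ (T−t)·‖Ā_n‖ one has |û_n(t) − û_{n,M}(t)| ≤ (α a₂/(2a₁))·‖g_n‖·e^{(T−t)‖Ā_n‖}·(1 − e^{−(T−t)‖Ā_n‖/(M+1)}). -/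
/-!
Termwise, the tail of the operator series is at most the real tail `e^x - ∑_{k ≤ M} x^k / k!` at
`x = ‖s • B‖`. Dividing the latter by `e^x` leaves `1 - F̄ x`, where
`F̄ x = ∑_{k ≤ M} e^{-x} x^k / k!` is the survival function of a sum `X` of `M + 1` independent
standard exponential variables. What is needed is therefore `e^{-x / (M + 1)} ≤ F̄ x`, an instance
of the Barlow–Proschan bound for distributions with increasing hazard rate and mean `μ = M + 1`: the
cumulative hazard `R = -log F̄` is convex, and `R X` is again a standard exponential variable, so
Jensen gives `R μ ≤ 𝔼 (R X) = 1`. Convexity and `R 0 = 0` then give `R x ≤ x / μ` on `[0, μ]`.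
-/

open Filter Finset Set
open scoped Nat Topology

theorem tangent_le_of_convexOn {S : Set ℝ} {f : ℝ → ℝ} {f' x y : ℝ} (hf : ConvexOn ℝ S f)
    (hx : x ∈ S) (hy : y ∈ S) (hderiv : HasDerivAt f f' x) : f x + f' * (y - x) ≤ f y := by
  rcases lt_trichotomy x y with hxy | rfl | hyx
  · have hslope := hf.le_slope_of_hasDerivAt hx hy hxy hderiv
    rw [slope_def_field, le_div_iff₀ (sub_pos.2 hxy)] at hslope
    linarith
  · simp
  · have hslope := hf.slope_le_of_hasDerivAt hy hx hyx hderiv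
    rw [slope_def_field, div_le_iff₀ (sub_pos.2 hyx)] at hslope
    linarith

/-- The density on `[0, ∞)` of the Erlang distribution of rate one and shape `M + 1`, that is, of
the sum of `M + 1` independent standard exponential variables. Off `[0, ∞)` the same formula is
kept, so that the function is smooth on `ℝ`. -/
noncomputable def erlangDensity (M : ℕ) (x : ℝ) : ℝ :=
  Real.exp (-x) * (x ^ M / M !)

/-- The survival function `x ↦ ℙ(X > x)`, `0 ≤ x`, of the Erlang distribution of rate one and shape
`M + 1`. It is defined as the probability that a Poisson variable of mean `x` is at most `M`;
`hasDerivAt_erlangSurvival` relates it to `erlangDensity`. -/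
noncomputable def erlangSurvival (M : ℕ) (x : ℝ) : ℝ :=
  ∑ k ∈ range (M + 1), erlangDensity k x

/-- The cumulative hazard `-log ℙ(X > x)` of the Erlang distribution of rate one and shape
`M + 1`. -/
noncomputable def erlangCumHazard (M : ℕ) (x : ℝ) : ℝ :=
  -Real.log (erlangSurvival M x)

section Erlang

variable (M : ℕ) {x y : ℝ}

theorem erlangDensity_nonneg (hx : 0 ≤ x) : 0 ≤ erlangDensity M x := by
  unfold erlangDensity
  positivity

theorem succ_mul_erlangDensity_succ (x : ℝ) :
    (M + 1) * erlangDensity (M + 1) x = x * erlangDensity M x := by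
  simp only [erlangDensity, Nat.factorial_succ, Nat.cast_mul, Nat.cast_succ, pow_succ]
  field_simp

theorem tendsto_erlangDensity_atTop : Tendsto (erlangDensity M) atTop (𝓝 0) := by
  have h := (Real.tendsto_pow_mul_exp_neg_atTop_nhds_zero M).div_const (M ! : ℝ)
  rw [zero_div] at h
  exact h.congr fun x => by rw [erlangDensity]; ring

theorem hasDerivAt_erlangDensity_zero (x : ℝ) :
    HasDerivAt (erlangDensity 0) (-erlangDensity 0 x) x := by
  have h : erlangDensity 0 = fun y => Real.exp (-y) := funext fun y => by simp [erlangDensity]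
  simpa [h] using (hasDerivAt_neg x).exp

theorem hasDerivAt_erlangDensity_succ (x : ℝ) :
    HasDerivAt (erlangDensity (M + 1)) (erlangDensity M x - erlangDensity (M + 1) x) x := by
  have h := (hasDerivAt_neg x).exp.mul ((hasDerivAt_pow (M + 1) x).div_const ((M + 1)! : ℝ))
  refine h.congr_deriv ?_
  simp only [erlangDensity, Nat.factorial_succ, Nat.cast_mul, Nat.cast_succ, Nat.add_sub_cancel]
  field_simp
  ring

theorem erlangSurvival_zero : erlangSurvival M 0 = 1 := by
  simp [erlangSurvival, erlangDensity, sum_range_succ']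

theorem erlangSurvival_pos (hx : 0 ≤ x) : 0 < erlangSurvival M x := by
  have hzero : 0 < erlangDensity 0 x := by simp [erlangDensity, Real.exp_pos]
  exact hzero.trans_le <|
    single_le_sum (fun k _ => erlangDensity_nonneg k hx) (mem_range.2 M.succ_pos)

theorem exp_mul_erlangSurvival (x : ℝ) :
    Real.exp x * erlangSurvival M x = ∑ k ∈ range (M + 1), x ^ k / k ! := by
  simp only [erlangSurvival, erlangDensity, ← mul_sum, ← mul_assoc, ← Real.exp_add,
    add_neg_cancel, Real.exp_zero, one_mul]

theorem erlangSurvival_le_one (hx : 0 ≤ x) : erlangSurvival M x ≤ 1 := by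
  refine le_of_mul_le_mul_left ?_ (Real.exp_pos x)
  rw [exp_mul_erlangSurvival, mul_one]
  exact Real.sum_le_exp_of_nonneg hx (M + 1)

theorem tendsto_erlangSurvival_atTop : Tendsto (erlangSurvival M) atTop (𝓝 0) := by
  have h := tendsto_finsetSum (range (M + 1)) fun k _ => tendsto_erlangDensity_atTop k
  rwa [sum_const_zero] at h

theorem hasDerivAt_erlangSurvival (x : ℝ) :
    HasDerivAt (erlangSurvival M) (-erlangDensity M x) x := by
  induction M with
  | zero =>
    have h : erlangSurvival 0 = erlangDensity 0 := funext fun y => by simp [erlangSurvival]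
    exact h ▸ hasDerivAt_erlangDensity_zero x
  | succ M ih =>
    have h : erlangSurvival (M + 1) = erlangSurvival M + erlangDensity (M + 1) :=
      funext fun y => sum_range_succ _ _
    rw [h]
    exact (ih.add (hasDerivAt_erlangDensity_succ M x)).congr_deriv (by ring)

theorem erlangDensity_mul_erlangDensity_le {k : ℕ} (hkM : k ≤ M) (hx : 0 ≤ x) (hxy : x ≤ y) :
    erlangDensity M x * erlangDensity k y ≤ erlangDensity M y * erlangDensity k x := by
  have hy : 0 ≤ y := hx.trans hxy
  have hpow : x ^ M * y ^ k ≤ y ^ M * x ^ k := by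
    rw [← Nat.sub_add_cancel hkM, pow_add, pow_add, mul_assoc, mul_assoc, mul_comm (y ^ k)]
    gcongr
  calc
    erlangDensity M x * erlangDensity k y
        = Real.exp (-x) * Real.exp (-y) / (M ! * k !) * (x ^ M * y ^ k) := by
      simp only [erlangDensity]; ring
    _ ≤ Real.exp (-x) * Real.exp (-y) / (M ! * k !) * (y ^ M * x ^ k) := by gcongr
    _ = erlangDensity M y * erlangDensity k x := by simp only [erlangDensity]; ring

theorem monotoneOn_erlangHazard :
    MonotoneOn (fun x => erlangDensity M x / erlangSurvival M x) (Ici 0) := by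
  intro x hx y hy hxy
  rw [div_le_div_iff₀ (erlangSurvival_pos M hx) (erlangSurvival_pos M hy)]
  simp only [erlangSurvival, mul_sum]
  exact sum_le_sum fun k hk =>
    erlangDensity_mul_erlangDensity_le M (mem_range_succ_iff.1 hk) hx hxy

theorem erlangCumHazard_zero : erlangCumHazard M 0 = 0 := by
  rw [erlangCumHazard, erlangSurvival_zero, Real.log_one, neg_zero]

theorem hasDerivAt_erlangCumHazard (hx : 0 ≤ x) :
    HasDerivAt (erlangCumHazard M) (erlangDensity M x / erlangSurvival M x) x :=
  ((hasDerivAt_erlangSurvival M x).log (erlangSurvival_pos M hx).ne').neg.congr_deriv (by ring)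

theorem convexOn_erlangCumHazard : ConvexOn ℝ (Ici 0) (erlangCumHazard M) := by
  refine MonotoneOn.convexOn_of_deriv (convex_Ici 0)
    (fun x hx => (hasDerivAt_erlangCumHazard M hx).continuousAt.continuousWithinAt)
    (fun x hx => (hasDerivAt_erlangCumHazard M
      (interior_subset hx)).differentiableAt.differentiableWithinAt) ?_
  refine ((monotoneOn_erlangHazard M).mono interior_subset).congr fun x hx => ?_
  exact (hasDerivAt_erlangCumHazard M (interior_subset hx)).deriv.symm

/-- Up to an additive constant, `∫₀ˣ (R t - a - r * (t - (M + 1))) f t dt` in closed form, where `f`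
and `R` are the Erlang density and cumulative hazard. With `a + r * (t - (M + 1))` the tangent to
`R` at the mean `M + 1`, this is the gap in Jensen's inequality, truncated at `x`. -/
noncomputable def erlangJensenGap (a r x : ℝ) : ℝ :=
  (a - 1 - erlangCumHazard M x) * erlangSurvival M x + r * ((M + 1) * erlangDensity (M + 1) x)

theorem hasDerivAt_erlangJensenGap (a r : ℝ) (hx : 0 ≤ x) :
    HasDerivAt (erlangJensenGap M a r)
      ((erlangCumHazard M x - (a + r * (x - (M + 1)))) * erlangDensity M x) x := by
  have hne : erlangSurvival M x ≠ 0 := (erlangSurvival_pos M hx).ne'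
  have hderiv := (((hasDerivAt_erlangCumHazard M hx).const_sub (a - 1)).mul
    (hasDerivAt_erlangSurvival M x)).add
      (((hasDerivAt_erlangDensity_succ M x).const_mul ((M : ℝ) + 1)).const_mul r)
  refine hderiv.congr_deriv ?_
  rw [mul_sub ((M : ℝ) + 1), succ_mul_erlangDensity_succ]
  field_simp
  ring

theorem monotoneOn_erlangJensenGap {a r : ℝ}
    (hline : ∀ x, 0 ≤ x → a + r * (x - (M + 1)) ≤ erlangCumHazard M x) :
    MonotoneOn (erlangJensenGap M a r) (Ici 0) :=
  monotoneOn_of_hasDerivWithinAt_nonneg (convex_Ici 0)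
    (fun _ hx => (hasDerivAt_erlangJensenGap M a r hx).continuousAt.continuousWithinAt)
    (fun _ hx => (hasDerivAt_erlangJensenGap M a r (interior_subset hx)).hasDerivWithinAt)
    (fun x hx => mul_nonneg (sub_nonneg.2 (hline x (interior_subset hx)))
      (erlangDensity_nonneg M (interior_subset hx)))

theorem erlangCumHazard_mean_le_one : erlangCumHazard M (M + 1) ≤ 1 := by
  have hmean : (0 : ℝ) ≤ M + 1 := by positivity
  set a := erlangCumHazard M (M + 1)
  set r := erlangDensity M (M + 1) / erlangSurvival M (M + 1)
  have hmono : MonotoneOn (erlangJensenGap M a r) (Ici 0) :=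
    monotoneOn_erlangJensenGap M fun x hx => tangent_le_of_convexOn
      (convexOn_erlangCumHazard M) hmean hx (hasDerivAt_erlangCumHazard M hmean)
  have hbound : ∀ x, 0 ≤ x →
      a - 1 ≤ (a - 1) * erlangSurvival M x + r * ((M + 1) * erlangDensity (M + 1) x) := by
    intro x hx
    have hgap : a - 1 ≤ erlangJensenGap M a r x := by
      simpa [erlangJensenGap, erlangCumHazard_zero, erlangSurvival_zero, erlangDensity] using
        hmono self_mem_Ici hx hx
    have hhazard : 0 ≤ erlangCumHazard M x * erlangSurvival M x :=
      mul_nonneg (neg_nonneg.2 (Real.log_nonpos (erlangSurvival_pos M hx).le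
        (erlangSurvival_le_one M hx))) (erlangSurvival_pos M hx).le
    rw [erlangJensenGap] at hgap
    linarith
  have hlim := ((tendsto_erlangSurvival_atTop M).const_mul (a - 1)).add
    (((tendsto_erlangDensity_atTop (M + 1)).const_mul ((M : ℝ) + 1)).const_mul r)
  simp only [mul_zero, add_zero] at hlim
  exact sub_nonpos.1 (ge_of_tendsto hlim ((eventually_ge_atTop 0).mono hbound))

theorem erlangCumHazard_le_div_mean (hx : 0 ≤ x) (hxM : x ≤ M + 1) :
    erlangCumHazard M x ≤ x / (M + 1) := by
  have hmean : (0 : ℝ) < M + 1 := by positivity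
  have hweight : 0 ≤ x / (M + 1) := by positivity
  have hweight' : 0 ≤ 1 - x / (M + 1) := sub_nonneg.2 ((div_le_one hmean).2 hxM)
  have hchord := (convexOn_erlangCumHazard M).2 self_mem_Ici hmean.le hweight' hweight
    (sub_add_cancel _ _)
  simp only [smul_eq_mul, mul_zero, zero_add, div_mul_cancel₀ x hmean.ne',
    erlangCumHazard_zero] at hchord
  exact hchord.trans (mul_le_of_le_one_right hweight (erlangCumHazard_mean_le_one M))

theorem exp_neg_div_mean_le_erlangSurvival (hx : 0 ≤ x) (hxM : x ≤ M + 1) :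
    Real.exp (-x / (M + 1)) ≤ erlangSurvival M x := by
  rw [← Real.le_log_iff_exp_le (erlangSurvival_pos M hx), neg_div]
  exact neg_le.1 (erlangCumHazard_le_div_mean M hx hxM)

theorem real_exp_sub_sum_le (hx : 0 ≤ x) (hxM : x ≤ M + 1) :
    Real.exp x - ∑ k ∈ range (M + 1), x ^ k / k ! ≤
      Real.exp x * (1 - Real.exp (-x / (M + 1))) := by
  rw [← exp_mul_erlangSurvival, ← mul_one_sub]
  gcongr
  exact exp_neg_div_mean_le_erlangSurvival M hx hxM

end Erlang

theorem norm_exp_sub_sum_le_real_exp_sub_sum (𝕜 : Type*) {A : Type*} [RCLike 𝕜] [NormedRing A]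
    [NormedAlgebra 𝕜 A] [CompleteSpace A] (a : A) (M : ℕ) :
    ‖NormedSpace.exp a - ∑ k ∈ range (M + 1), (k ! : 𝕜)⁻¹ • a ^ k‖ ≤
      Real.exp ‖a‖ - ∑ k ∈ range (M + 1), ‖a‖ ^ k / k ! := by
  have htail := (hasSum_nat_add_iff' (M + 1)).2 (NormedSpace.exp_series_hasSum_exp' (𝕂 := 𝕜) a)
  have hrealTail := (hasSum_nat_add_iff' (M + 1)).2 (NormedSpace.expSeries_div_hasSum_exp ‖a‖)
  rw [← Real.exp_eq_exp_ℝ] at hrealTail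
  refine htail.norm_le_of_bounded hrealTail fun k => ?_
  rw [norm_smul, norm_inv, RCLike.norm_natCast, div_eq_inv_mul]
  gcongr
  exact norm_pow_le' a (by lia)

theorem exp_truncation_error_bound_general {𝕜 E F : Type*} [RCLike 𝕜]
    [NormedAddCommGroup E] [NormedSpace 𝕜 E] [CompleteSpace E]
    [NormedAddCommGroup F] [NormedSpace 𝕜 F]
    (L : E →L[𝕜] F) (v : E) (B : E →L[𝕜] E) (s : 𝕜) (M : ℕ) (hM : ‖s‖ * ‖B‖ ≤ M + 1) :
    ‖L (NormedSpace.exp (s • B) v) - L (∑ k ∈ range (M + 1), (s ^ k / k !) • (B ^ k) v)‖ ≤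
      ‖L‖ * ‖v‖ * Real.exp (‖s‖ * ‖B‖) * (1 - Real.exp (-(‖s‖ * ‖B‖) / (M + 1))) := by
  set D := NormedSpace.exp (s • B) - ∑ k ∈ range (M + 1), (k ! : 𝕜)⁻¹ • (s • B) ^ k with hD
  have hdiff : NormedSpace.exp (s • B) v - ∑ k ∈ range (M + 1), (s ^ k / k !) • (B ^ k) v
      = D v := by
    simp [hD, smul_pow, smul_smul, div_eq_inv_mul]
  have hDnorm : ‖D‖ ≤
      Real.exp (‖s‖ * ‖B‖) * (1 - Real.exp (-(‖s‖ * ‖B‖) / (M + 1))) := by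
    rw [← norm_smul] at hM ⊢
    exact (norm_exp_sub_sum_le_real_exp_sub_sum 𝕜 (s • B) M).trans
      (real_exp_sub_sum_le M (norm_nonneg _) hM)
  calc
    ‖L (NormedSpace.exp (s • B) v) - L (∑ k ∈ range (M + 1), (s ^ k / k !) • (B ^ k) v)‖
        = ‖L (D v)‖ := by rw [← map_sub, hdiff]
    _ ≤ ‖L‖ * (‖D‖ * ‖v‖) := L.le_opNorm_of_le (D.le_opNorm v)
    _ ≤ ‖L‖ * (Real.exp (‖s‖ * ‖B‖) * (1 - Real.exp (-(‖s‖ * ‖B‖) / (M + 1))) * ‖v‖) := by gcongr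
    _ = _ := by ring

/-- Let `H` be a real Hilbert space, `B` a bounded operator on `H`, `ν ∈ H` with `‖ν‖ = 1`,
`g ∈ H` and `s ≥ 0`.  If `M ∈ ℕ` satisfies `M ≥ s ‖B‖`, then
`|⟨g, exp(sB) ν⟩ − ⟨g, ∑_{k=0}^M (s^k/k!) B^k ν⟩| ≤ ‖g‖ e^{s‖B‖} (1 − e^{−s‖B‖/(M+1)})`.
In particular, for the lifted optimal control `û_n(t) = (α a₂/(2a₁)) ⟨g_n, exp((T−t)Ā_n) ν⟩`
and its truncation `û_{n,M}(t) = (α a₂/(2a₁)) ⟨g_n, ∑_{k=0}^M ((T−t)^k/k!) Ā_n^k ν⟩`, whenever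
`M ≥ (T−t) ‖Ā_n‖` one has
`|û_n(t) − û_{n,M}(t)| ≤ (α a₂/(2a₁)) ‖g_n‖ e^{(T−t)‖Ā_n‖} (1 − e^{−(T−t)‖Ā_n‖/(M+1)})`. -/
theorem exp_truncation_error_bound
    {H : Type*} [NormedAddCommGroup H] [InnerProductSpace ℝ H] [CompleteSpace H]
    (ν : H) (hν : ‖ν‖ = 1) :
    (∀ (B : H →L[ℝ] H) (g : H) (s : ℝ), 0 ≤ s → ∀ M : ℕ, s * ‖B‖ ≤ M →
      |(inner ℝ g (NormedSpace.exp (s • B) ν) : ℝ) -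
          (inner ℝ g (∑ k ∈ Finset.range (M + 1),
            (s ^ k / (k.factorial : ℝ)) • ((B ^ k) ν)) : ℝ)| ≤
        ‖g‖ * Real.exp (s * ‖B‖) * (1 - Real.exp (-(s * ‖B‖) / (M + 1)))) ∧
    (∀ (An : H →L[ℝ] H) (gn : H) (α a₁ a₂ T t : ℝ),
      0 < α → 0 < a₁ → 0 < a₂ → 0 < T → t ∈ Set.Icc (0 : ℝ) T →
      ∀ M : ℕ, (T - t) * ‖An‖ ≤ M →
      |(α * a₂ / (2 * a₁)) * (inner ℝ gn (NormedSpace.exp ((T - t) • An) ν) : ℝ) -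
          (α * a₂ / (2 * a₁)) * (inner ℝ gn (∑ k ∈ Finset.range (M + 1),
            ((T - t) ^ k / (k.factorial : ℝ)) • ((An ^ k) ν)) : ℝ)| ≤
        (α * a₂ / (2 * a₁)) * ‖gn‖ * Real.exp ((T - t) * ‖An‖) *
          (1 - Real.exp (-((T - t) * ‖An‖) / (M + 1)))) := by
  constructor
  · intro B g s hs M hM
    have h := exp_truncation_error_bound_general (innerSL ℝ g) ν B s M
      (by rw [Real.norm_of_nonneg hs]; linarith)
    rwa [innerSL_apply_norm, hν, mul_one, Real.norm_of_nonneg hs] at h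
  · intro An gn α a₁ a₂ T t hα ha₁ ha₂ _ ht M hM
    have hTt : 0 ≤ T - t := sub_nonneg.2 ht.2
    have hc : 0 ≤ α * a₂ / (2 * a₁) := by positivity
    have h := exp_truncation_error_bound_general ((α * a₂ / (2 * a₁)) • innerSL ℝ gn) ν An (T - t) M
      (by rw [Real.norm_of_nonneg hTt]; linarith)
    rwa [norm_smul, Real.norm_of_nonneg hc, innerSL_apply_norm, hν, mul_one,
      Real.norm_of_nonneg hTt] at h
end

section
/- Let A be the shift operator on L²(ℝ), N ∈ ℕ, and Ā z := A z − N!·⟨1_{[-N,-N+1]}, z⟩·1_{[0,1]}. Then for every s ≥ 0, ⟨1_{[-N,-N+1]}, exp(sĀ) 1_{[0,1]}⟩ = Σ_{p=0}^∞ (−1)^p·(N!)^p·s^{p(N+1)+N}/(p(N+1)+N)!, i.e. it equals s^N·E_{N+1,N+1}(−N!·s^{N+1}) where E_{a,b}(z) := Σ_{p=0}^∞ z^p/Γ(ap+b) is the Mittag-Leffler function. Consequently the optimal advertising control for the monomial kernel t^N with α = β = 1, a₁ = 1, a₂ = 1 is û(t) = (N!·(T−t)^N/2)·E_{N+1,N+1}(−N!·(T−t)^{N+1}).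 -/
open MeasureTheory

/-- The Mittag-Leffler function `E_{a,b}(z) = ∑_{p=0}^∞ z^p / Γ(ap + b)`. -/
noncomputable def mittagLeffler (a b z : ℝ) : ℝ :=
  ∑' p : ℕ, z ^ p / Real.Gamma (a * p + b)

/-!
Write `v = 1_{[0,1]}` and `φ = ⟨1_{[-N,-N+1]}, ·⟩`, so that `Ā = A - c φ(·) v` with `c = N!` is a
rank-one perturbation of the shift. Since `φ(Aⁿ v)` is the overlap of `[n - N, n - N + 1]` with
`[0, 1]`, it equals `1` for `n = N` and `0` otherwise. The discrete variation-of-constants formula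
`Āⁿ⁺¹ v = Aⁿ⁺¹ v - c ∑_{i + j = n} φ(Āⁱ v) Aʲ v` therefore gives `φ(Āⁿ v) = [n = N]` for `n ≤ N`
and `φ(Āⁿ⁺ᴺ⁺¹ v) = -c φ(Āⁿ v)`. Hence only the powers `n = p (N + 1) + N` contribute to
`φ(exp(sĀ) v)`, with `φ(Āⁿ v) = (-c)ᵖ`, and the exponential series becomes the Mittag-Leffler
series.
-/

section RankOnePerturbation

open Finset

variable {R M : Type*} [CommRing R] [AddCommGroup M] [Module R M]
  {A B : Module.End R M} {φ : M →ₗ[R] R} {v : M} {c : R}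

lemma rankOnePerturbation_pow_succ_apply (hB : ∀ z, B z = A z - (c * φ z) • v) (z : M) (n : ℕ) :
    (B ^ (n + 1)) z =
      (A ^ (n + 1)) z - ∑ ij ∈ antidiagonal n, (c * φ ((B ^ ij.1) z)) • (A ^ ij.2) v := by
  induction n with
  | zero => simp [hB]
  | succ n ih =>
    rw [pow_succ' B, Module.End.mul_apply, hB, Nat.sum_antidiagonal_succ']
    nth_rw 1 [ih]
    simp only [map_sub, map_sum, map_smul, ← Module.End.mul_apply, ← pow_succ', pow_zero,
      Module.End.one_apply]
    abel

lemma map_rankOnePerturbation_pow_succ (hB : ∀ z, B z = A z - (c * φ z) • v) (z : M) (n : ℕ) :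
    φ ((B ^ (n + 1)) z) =
      φ ((A ^ (n + 1)) z) - c * ∑ ij ∈ antidiagonal n, φ ((B ^ ij.1) z) * φ ((A ^ ij.2) v) := by
  simp [rankOnePerturbation_pow_succ_apply hB, mul_sum, mul_assoc]

variable {N : ℕ}

lemma map_rankOnePerturbation_pow_of_le (hB : ∀ z, B z = A z - (c * φ z) • v)
    (hA : ∀ n, φ ((A ^ n) v) = if n = N then 1 else 0) {n : ℕ} (hn : n ≤ N) :
    φ ((B ^ n) v) = if n = N then 1 else 0 := by
  cases n with
  | zero => simpa using hA 0
  | succ n =>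
    have sum_eq_zero : ∑ ij ∈ antidiagonal n, φ ((B ^ ij.1) v) * φ ((A ^ ij.2) v) = 0 := by
      refine Finset.sum_eq_zero fun ij hij => ?_
      have hsum : ij.1 + ij.2 = n := mem_antidiagonal.1 hij
      have hj : ij.2 ≠ N := by omega
      rw [hA, if_neg hj, mul_zero]
    rw [map_rankOnePerturbation_pow_succ hB, sum_eq_zero, mul_zero, sub_zero, hA]

lemma map_rankOnePerturbation_pow_add (hB : ∀ z, B z = A z - (c * φ z) • v)
    (hA : ∀ n, φ ((A ^ n) v) = if n = N then 1 else 0) (n : ℕ) :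
    φ ((B ^ (n + (N + 1))) v) = -c * φ ((B ^ n) v) := by
  have sum_eq : ∑ ij ∈ antidiagonal (n + N), φ ((B ^ ij.1) v) * φ ((A ^ ij.2) v)
      = φ ((B ^ n) v) := by
    rw [sum_eq_single_of_mem (n, N) (by simp), hA, if_pos rfl, mul_one]
    intro ij hij hne
    have hsum : ij.1 + ij.2 = n + N := mem_antidiagonal.1 hij
    have hj : ij.2 ≠ N := fun hj => hne (Prod.ext (add_right_cancel (hj ▸ hsum)) hj)
    rw [hA, if_neg hj, mul_zero]
  rw [← add_assoc, map_rankOnePerturbation_pow_succ hB, sum_eq, hA, if_neg (by omega)]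
  ring

lemma map_rankOnePerturbation_pow_mul_add (hB : ∀ z, B z = A z - (c * φ z) • v)
    (hA : ∀ n, φ ((A ^ n) v) = if n = N then 1 else 0) {r : ℕ} (hr : r ≤ N) (p : ℕ) :
    φ ((B ^ (p * (N + 1) + r)) v) = if r = N then (-c) ^ p else 0 := by
  induction p with
  | zero => simpa using map_rankOnePerturbation_pow_of_le hB hA hr
  | succ p ih =>
    rw [show (p + 1) * (N + 1) + r = p * (N + 1) + r + (N + 1) by ring,
      map_rankOnePerturbation_pow_add hB hA, ih, mul_ite, mul_zero, pow_succ']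

end RankOnePerturbation

section Exponential

variable {𝕜 E : Type*} [RCLike 𝕜] [NormedAddCommGroup E] [NormedSpace 𝕜 E] [CompleteSpace E]

lemma hasSum_map_exp_smul_apply (B : E →L[𝕜] E) (φ : E →L[𝕜] 𝕜) (v : E) (s : 𝕜) :
    HasSum (fun n : ℕ => s ^ n / n.factorial * φ ((B ^ n) v))
      (φ (NormedSpace.exp (s • B) v)) := by
  have hasSum_exp := NormedSpace.exp_series_hasSum_exp' (𝕂 := 𝕜) (s • B)
  have hasSum_map := hasSum_exp.mapL (φ ∘L ContinuousLinearMap.apply 𝕜 E v)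
  refine hasSum_map.congr_fun fun n => ?_
  simp [smul_pow, div_eq_inv_mul, mul_assoc]

lemma hasSum_map_exp_smul_rankOnePerturbation {A B : E →L[𝕜] E} {φ : E →L[𝕜] 𝕜} {v : E} {c : 𝕜}
    {N : ℕ} (hB : ∀ z, B z = A z - (c * φ z) • v)
    (hA : ∀ n, φ ((A ^ n) v) = if n = N then 1 else 0) (s : 𝕜) :
    HasSum (fun p : ℕ => (-c) ^ p * s ^ (p * (N + 1) + N) / (p * (N + 1) + N).factorial)
      (φ (NormedSpace.exp (s • B) v)) := by
  have moment {r : ℕ} (hr : r ≤ N) (p : ℕ) :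
      φ ((B ^ (p * (N + 1) + r)) v) = if r = N then (-c) ^ p else 0 := by
    simpa [← ContinuousLinearMap.toLinearMap_pow] using
      map_rankOnePerturbation_pow_mul_add (A := A.toLinearMap) (B := B.toLinearMap)
        (φ := φ.toLinearMap) hB (by simpa [← ContinuousLinearMap.toLinearMap_pow] using hA) hr p
  have index_injective : Function.Injective fun p : ℕ => p * (N + 1) + N := fun p q hpq =>
    Nat.eq_of_mul_eq_mul_right N.succ_pos (Nat.add_right_cancel hpq)
  have term_eq_zero : ∀ n ∉ Set.range fun p : ℕ => p * (N + 1) + N,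
      s ^ n / n.factorial * φ ((B ^ n) v) = 0 := by
    intro n hn
    have hmod : n % (N + 1) ≠ N := fun h => hn ⟨n / (N + 1), by
      simpa only [h] using Nat.div_add_mod' n (N + 1)⟩
    rw [← Nat.div_add_mod' n (N + 1), moment (Nat.lt_succ_iff.1 (Nat.mod_lt n N.succ_pos)),
      if_neg hmod, mul_zero]
  refine ((index_injective.hasSum_iff term_eq_zero).2
    (hasSum_map_exp_smul_apply B φ v s)).congr_fun fun p => ?_
  simp only [Function.comp_apply, moment le_rfl, if_true]
  ring

end Exponential

lemma pow_mul_mittagLeffler_natCast (k m : ℕ) (c s : ℝ) :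
    s ^ m * mittagLeffler k (m + 1) (c * s ^ k) =
      ∑' p : ℕ, c ^ p * s ^ (p * k + m) / (p * k + m).factorial := by
  rw [mittagLeffler, ← tsum_mul_left]
  refine tsum_congr fun p => ?_
  have gamma_eq : Real.Gamma (k * p + (m + 1)) = (p * k + m).factorial := by
    rw [← Real.Gamma_nat_eq_factorial]
    push_cast
    ring_nf
  rw [gamma_eq, mul_pow, ← pow_mul, pow_add, mul_comm k p]
  ring

section Shift

lemma inner_ind_left (a b : ℝ) (f : Lp ℝ 2 (volume : Measure ℝ)) :
    inner ℝ (ind a b) f = ∫ x in Set.Icc a b, f x :=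
  L2.inner_indicatorConstLp_one _ _ f

lemma inner_ind_ind (a b a' b' : ℝ) :
    inner ℝ (ind a b) (ind a' b') = max (min b b' - max a a') 0 := by
  rw [← Real.volume_real_Icc, ← Set.Icc_inter_Icc]
  exact L2.real_inner_indicatorConstLp_one_indicatorConstLp_one _ _ _ _

lemma inner_ind_intCast_ind_zero_one (k : ℤ) :
    inner ℝ (ind k (k + 1)) (ind 0 1) = if k = 0 then 1 else 0 := by
  rw [inner_ind_ind]
  rcases lt_trichotomy k 0 with hk | rfl | hk
  · have hk' : (k : ℝ) + 1 ≤ 0 := by exact_mod_cast hk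
    rw [if_neg hk.ne, max_eq_right]
    linarith [min_le_left ((k : ℝ) + 1) 1, le_max_right (k : ℝ) 0]
  · simp
  · have hk' : (1 : ℝ) ≤ k := by exact_mod_cast hk
    rw [if_neg hk.ne', max_eq_right]
    linarith [min_le_right ((k : ℝ) + 1) 1, le_max_left (k : ℝ) 0]

variable {A : Lp ℝ 2 (volume : Measure ℝ) →L[ℝ] Lp ℝ 2 (volume : Measure ℝ)} {h : ℝ}

lemma inner_ind_shift (hA : ∀ f, A f =ᵐ[volume] fun x => f (x + h))
    (a b : ℝ) (f : Lp ℝ 2 (volume : Measure ℝ)) :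
    inner ℝ (ind a b) (A f) = inner ℝ (ind (a + h) (b + h)) f := by
  have preimage_eq : (· + h) ⁻¹' Set.Icc (a + h) (b + h) = Set.Icc a b := by simp
  calc inner ℝ (ind a b) (A f) = ∫ x in Set.Icc a b, f (x + h) := by
        rw [inner_ind_left, integral_congr_ae (ae_restrict_of_ae (hA f))]
    _ = ∫ x in Set.Icc (a + h) (b + h), f x := by
        rw [← preimage_eq]
        exact (measurePreserving_add_right volume h).setIntegral_preimage_emb
          (measurableEmbedding_addRight h) f _
    _ = inner ℝ (ind (a + h) (b + h)) f := (inner_ind_left _ _ f).symm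

lemma inner_ind_shift_pow (hA : ∀ f, A f =ᵐ[volume] fun x => f (x + h)) (n : ℕ)
    (a b : ℝ) (f : Lp ℝ 2 (volume : Measure ℝ)) :
    inner ℝ (ind a b) ((A ^ n) f) = inner ℝ (ind (a + n * h) (b + n * h)) f := by
  induction n generalizing a b with
  | zero => simp
  | succ n ih =>
    rw [pow_succ', mul_apply_eq_comp, inner_ind_shift hA, ih]
    push_cast
    ring_nf

lemma inner_ind_unit_shift_pow (hA : ∀ f, A f =ᵐ[volume] fun x => f (x + 1)) (N n : ℕ) :
    inner ℝ (ind (-N) (-N + 1)) ((A ^ n) (ind 0 1)) = if n = N then 1 else 0 := by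
  have overlap := inner_ind_intCast_ind_zero_one ((n : ℤ) - N)
  simp only [sub_eq_zero, Nat.cast_inj] at overlap
  rw [inner_ind_shift_pow hA, ← overlap]
  push_cast
  ring_nf

end Shift

theorem monomial_kernel_optimal_control_general
    {A Abar : Lp ℝ 2 (volume : Measure ℝ) →L[ℝ] Lp ℝ 2 (volume : Measure ℝ)}
    (hA : ∀ f, A f =ᵐ[volume] fun x => f (x + 1)) {N : ℕ} {c : ℝ}
    (hAbar : ∀ z, Abar z = A z - (c * inner ℝ (ind (-N) (-N + 1)) z) • ind 0 1) (s : ℝ) :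
    HasSum (fun p : ℕ => (-1) ^ p * c ^ p * s ^ (p * (N + 1) + N) / (p * (N + 1) + N).factorial)
      (inner ℝ (ind (-N) (-N + 1)) (NormedSpace.exp (s • Abar) (ind 0 1))) ∧
    inner ℝ (ind (-N) (-N + 1)) (NormedSpace.exp (s • Abar) (ind 0 1)) =
      s ^ N * mittagLeffler (N + 1) (N + 1) (-c * s ^ (N + 1)) := by
  have hasSum_inner := hasSum_map_exp_smul_rankOnePerturbation
    (φ := innerSL ℝ (ind (-N) (-N + 1))) hAbar (inner_ind_unit_shift_pow hA N) s
  have mittagLeffler_eq := pow_mul_mittagLeffler_natCast (N + 1) N (-c) s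
  rw [Nat.cast_succ] at mittagLeffler_eq
  refine ⟨?_, (mittagLeffler_eq.trans hasSum_inner.tsum_eq).symm⟩
  simpa only [← mul_pow, neg_one_mul, innerSL_apply_apply] using hasSum_inner

/-- Let `A` be the shift operator on `L²(ℝ)`, `N ∈ ℕ`, and
`Ā z := A z − N! ⟨1_{[-N,-N+1]}, z⟩ 1_{[0,1]}`.  Then for every `s ≥ 0`,
`⟨1_{[-N,-N+1]}, exp(sĀ) 1_{[0,1]}⟩ = ∑_{p=0}^∞ (−1)^p (N!)^p s^{p(N+1)+N}/(p(N+1)+N)!`,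
i.e. it equals `s^N E_{N+1,N+1}(−N! s^{N+1})`.  Consequently the optimal advertising control
for the monomial kernel `t^N` with `α = β = 1`, `a₁ = a₂ = 1` is
`û(t) = (N! (T−t)^N / 2) E_{N+1,N+1}(−N! (T−t)^{N+1})`. -/
theorem monomial_kernel_optimal_control
    (A : Lp ℝ 2 (volume : Measure ℝ) →L[ℝ] Lp ℝ 2 (volume : Measure ℝ))
    (hA : ∀ f : Lp ℝ 2 (volume : Measure ℝ), (A f : ℝ → ℝ) =ᵐ[volume] fun x => f (x + 1))
    (N : ℕ)
    (Abar : Lp ℝ 2 (volume : Measure ℝ) →L[ℝ] Lp ℝ 2 (volume : Measure ℝ))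
    (hAbar : ∀ z, Abar z = A z -
      ((N.factorial : ℝ) * (inner ℝ (ind (-(N : ℝ)) (-(N : ℝ) + 1)) z : ℝ)) • ind 0 1) :
    (∀ s : ℝ, 0 ≤ s →
      (inner ℝ (ind (-(N : ℝ)) (-(N : ℝ) + 1))
          (NormedSpace.exp (s • Abar) (ind 0 1)) : ℝ) =
        ∑' p : ℕ, (-1 : ℝ) ^ p * (N.factorial : ℝ) ^ p *
          s ^ (p * (N + 1) + N) / ((p * (N + 1) + N).factorial : ℝ)) ∧
    (∀ s : ℝ, 0 ≤ s →
      (inner ℝ (ind (-(N : ℝ)) (-(N : ℝ) + 1))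
          (NormedSpace.exp (s • Abar) (ind 0 1)) : ℝ) =
        s ^ N * mittagLeffler (N + 1) (N + 1) (-(N.factorial : ℝ) * s ^ (N + 1))) ∧
    (∀ T : ℝ, 0 < T → ∀ t ∈ Set.Icc (0 : ℝ) T,
      ((1 : ℝ) * 1 / (2 * 1)) *
          (inner ℝ ((N.factorial : ℝ) • ind (-(N : ℝ)) (-(N : ℝ) + 1))
            (NormedSpace.exp ((T - t) • Abar) (ind 0 1)) : ℝ) =
        ((N.factorial : ℝ) * (T - t) ^ N / 2) *
          mittagLeffler (N + 1) (N + 1) (-(N.factorial : ℝ) * (T - t) ^ (N + 1))) := by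
  have key := monomial_kernel_optimal_control_general hA hAbar
  refine ⟨fun s _ => (key s).1.tsum_eq.symm, fun s _ => (key s).2, fun T _ t _ => ?_⟩
  rw [real_inner_smul_left, (key _).2]
  ring
end

section
/- Let T > 0, h ∈ (0,1), H > 0 and let K : [0,T] → ℝ be Hölder continuous of order h with constant H, i.e. |K(t) − K(s)| ≤ H·|t−s|^h for all s, t ∈ [0,T]. Then there exists a constant C > 0, depending only on T, H, h and sup_{t∈[0,T]}|K(t)|, such that for all x, y ∈ [0,T]: ∫_0^{x∧y} (K(x−s) − K(y−s))² ds + ∫_{x∧y}^{x∨y} K(x∨y − s)² ds ≤ C·|x − y|^{2·(h ∧ 1/2)}. -/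
open MeasureTheory

/-!
On the common window `(0, x ∧ y]` the Hölder bound makes the integrand at most `H² |x - y|^(2h)`; on
the remaining window, whose length is `|x - y|`, the integrand is at most `M²`. As `|x - y| ≤ T`,
both exponents `2h` and `1` may be lowered to `2 (h ∧ 1/2)` at the cost of a power of `T`.
-/

lemma rpow_le_rpow_sub_mul_rpow {d T a b : ℝ} (hd : 0 ≤ d) (hdT : d ≤ T) (hb : 0 ≤ b)
    (hba : b ≤ a) : d ^ a ≤ T ^ (a - b) * d ^ b :=
  have hab : 0 ≤ a - b := sub_nonneg.2 hba
  calc d ^ a = d ^ (a - b) * d ^ b := by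
        rw [← Real.rpow_add_of_nonneg hd hab hb, sub_add_cancel]
    _ ≤ T ^ (a - b) * d ^ b := by gcongr

section NormPowIntegrals

variable {E : Type*} [SeminormedAddCommGroup E] {K : ℝ → E}

lemma setIntegral_Ioc_norm_pow_le {f : ℝ → E} {a b C : ℝ} (hab : a ≤ b)
    (hf : ∀ s ∈ Set.Ioc a b, ‖f s‖ ≤ C) (n : ℕ) :
    ∫ s in Set.Ioc a b, ‖f s‖ ^ n ≤ C ^ n * (b - a) := by
  have norm_integrand_le : ∀ s ∈ Set.Ioc a b, ‖‖f s‖ ^ n‖ ≤ C ^ n := fun s hs => by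
    rw [norm_pow, norm_norm]
    exact pow_le_pow_left₀ (norm_nonneg _) (hf s hs) n
  calc ∫ s in Set.Ioc a b, ‖f s‖ ^ n ≤ ‖∫ s in Set.Ioc a b, ‖f s‖ ^ n‖ := Real.le_norm_self _
    _ ≤ C ^ n * volume.real (Set.Ioc a b) :=
        norm_setIntegral_le_of_norm_le_const measure_Ioc_lt_top norm_integrand_le
    _ = C ^ n * (b - a) := by rw [Real.volume_real_Ioc_of_le hab]

lemma setIntegral_norm_sub_pow_le_of_modulus {ω : ℝ → ℝ} {T x y : ℝ}
    (hK : ∀ s ∈ Set.Icc 0 T, ∀ t ∈ Set.Icc 0 T, ‖K t - K s‖ ≤ ω |t - s|)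
    (hx : x ∈ Set.Icc 0 T) (hy : y ∈ Set.Icc 0 T) (n : ℕ) :
    ∫ s in Set.Ioc 0 (min x y), ‖K (x - s) - K (y - s)‖ ^ n ≤ ω |x - y| ^ n * min x y := by
  have sub_mem {z s : ℝ} (hz : z ∈ Set.Icc 0 T) (hs : 0 < s) (hsz : s ≤ z) :
      z - s ∈ Set.Icc 0 T := ⟨sub_nonneg.2 hsz, by linarith [hz.2]⟩
  have increment_le : ∀ s ∈ Set.Ioc 0 (min x y), ‖K (x - s) - K (y - s)‖ ≤ ω |x - y| :=
    fun s ⟨hs, hsxy⟩ => by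
      have ⟨hsx, hsy⟩ := le_min_iff.1 hsxy
      simpa only [sub_sub_sub_cancel_right] using
        hK (y - s) (sub_mem hy hs hsy) (x - s) (sub_mem hx hs hsx)
  simpa only [sub_zero] using setIntegral_Ioc_norm_pow_le (le_min hx.1 hy.1) increment_le n

lemma setIntegral_norm_comp_sub_left_pow_le {a b M : ℝ} (hab : a ≤ b)
    (hM : ∀ t ∈ Set.Ico 0 (b - a), ‖K t‖ ≤ M) (n : ℕ) :
    ∫ s in Set.Ioc a b, ‖K (b - s)‖ ^ n ≤ M ^ n * (b - a) :=
  setIntegral_Ioc_norm_pow_le hab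
    (fun s hs => hM (b - s) ⟨sub_nonneg.2 hs.2, sub_lt_sub_left hs.1 b⟩) n

theorem holder_kernel_increment_variance_bound_general {T h H M x y : ℝ} (hh : 0 < h)
    (hK : ∀ s ∈ Set.Icc 0 T, ∀ t ∈ Set.Icc 0 T, ‖K t - K s‖ ≤ H * |t - s| ^ h)
    (hM : ∀ t ∈ Set.Icc 0 T, ‖K t‖ ≤ M) (hx : x ∈ Set.Icc 0 T) (hy : y ∈ Set.Icc 0 T) :
    (∫ s in Set.Ioc 0 (min x y), ‖K (x - s) - K (y - s)‖ ^ 2) +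
        (∫ s in Set.Ioc (min x y) (max x y), ‖K (max x y - s)‖ ^ 2) ≤
      (H ^ 2 * T ^ (2 * h - 2 * min h (1 / 2)) * T + M ^ 2 * T ^ (1 - 2 * min h (1 / 2))) *
        |x - y| ^ (2 * min h (1 / 2)) := by
  set m := min h (1 / 2)
  have hm : 0 ≤ 2 * m := by positivity
  have hmh : 2 * m ≤ 2 * h := by gcongr; exact min_le_left _ _
  have hm1 : 2 * m ≤ 1 := by linarith [min_le_right h (1 / 2)]
  have max_sub_min : max x y - min x y = |x - y| := max_sub_min_eq_abs' x y
  have hT : 0 ≤ T := hx.1.trans hx.2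
  have dist_le : |x - y| ≤ T := abs_sub_le_of_nonneg_of_le hx.1 hx.2 hy.1 hy.2
  have common_le : ∫ s in Set.Ioc 0 (min x y), ‖K (x - s) - K (y - s)‖ ^ 2 ≤
      H ^ 2 * (T ^ (2 * h - 2 * m) * |x - y| ^ (2 * m)) * T :=
    calc _ ≤ (H * |x - y| ^ h) ^ 2 * min x y :=
          setIntegral_norm_sub_pow_le_of_modulus (ω := fun d => H * d ^ h) hK hx hy 2
      _ = H ^ 2 * |x - y| ^ (2 * h) * min x y := by
          rw [mul_pow, mul_comm 2 h, Real.rpow_mul (abs_nonneg _), Real.rpow_two]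
      _ ≤ _ := by
          gcongr
          · exact le_min hx.1 hy.1
          · exact rpow_le_rpow_sub_mul_rpow (abs_nonneg _) dist_le hm hmh
          · exact min_le_of_left_le hx.2
  have tail_le : ∫ s in Set.Ioc (min x y) (max x y), ‖K (max x y - s)‖ ^ 2 ≤
      M ^ 2 * (T ^ (1 - 2 * m) * |x - y| ^ (2 * m)) :=
    calc _ ≤ M ^ 2 * |x - y| := by
          rw [← max_sub_min]
          refine setIntegral_norm_comp_sub_left_pow_le min_le_max (fun t ht => hM t ⟨ht.1, ?_⟩) 2
          exact ht.2.le.trans (max_sub_min.trans_le dist_le)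
      _ ≤ _ := by
          gcongr
          simpa only [Real.rpow_one] using
            rpow_le_rpow_sub_mul_rpow (abs_nonneg _) dist_le hm hm1
  linarith

end NormPowIntegrals

/-- Let `T > 0`, `h ∈ (0,1)`, `H > 0`.  Then there is a constant `C > 0`, depending only on
`T`, `H`, `h` and (a bound `Ksup` on) `sup_{t∈[0,T]} |K(t)|`, such that for every
`h`-Hölder continuous kernel `K` with constant `H` and every `x, y ∈ [0,T]`,
`∫_0^{x∧y} (K(x−s) − K(y−s))² ds + ∫_{x∧y}^{x∨y} K(x∨y − s)² ds ≤ C |x − y|^{2(h∧1/2)}`. -/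
theorem holder_kernel_increment_variance_bound
    (T hc Hc Ksup : ℝ) (hT : 0 < T) (hhc : hc ∈ Set.Ioo (0 : ℝ) 1) (hHc : 0 < Hc) :
    ∃ C > 0, ∀ K : ℝ → ℝ,
      (∀ s ∈ Set.Icc (0 : ℝ) T, ∀ t ∈ Set.Icc (0 : ℝ) T,
        |K t - K s| ≤ Hc * |t - s| ^ hc) →
      (∀ t ∈ Set.Icc (0 : ℝ) T, |K t| ≤ Ksup) →
      ∀ x ∈ Set.Icc (0 : ℝ) T, ∀ y ∈ Set.Icc (0 : ℝ) T,
        (∫ s in Set.Ioc (0 : ℝ) (min x y), (K (x - s) - K (y - s)) ^ 2) +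
            (∫ s in Set.Ioc (min x y) (max x y), (K (max x y - s)) ^ 2) ≤
          C * |x - y| ^ (2 * min hc (1 / 2)) := by
  refine ⟨Hc ^ 2 * T ^ (2 * hc - 2 * min hc (1 / 2)) * T + Ksup ^ 2 * T ^ (1 - 2 * min hc (1 / 2)),
    by positivity, fun K hK hKsup x hx y hy => ?_⟩
  simpa only [Real.norm_eq_abs, sq_abs] using
    holder_kernel_increment_variance_bound_general (K := K) hhc.1 hK hKsup hx hy
end
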